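/- arXiv:1302.4703 — 5 statements merged into one kernel-verified Lean document; each statement's English description precedes it below -/
import Mathlib

section
/- Any two maximal caps in AG(2,3) are affinely equivalent. -/
/-- A cap in `AG(n,3)`: a finite set of points of `Fin n → ZMod 3` containing no
three distinct collinear points (three distinct points are collinear iff they sum to zero). -/
def IsCap {n : ℕ} (C : Finset (Fin n → ZMod 3)) : Prop :=
  ∀ x ∈ C, ∀ y ∈ C, ∀ z ∈ C, x ≠ y → x ≠ z → y ≠ z → x + y + z ≠ 0

/-- A maximal cap: a cap of largest possible size. -/
def MaximalCap {n : ℕ} (C : Finset (Fin n → ZMod 3)) : Prop :=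
  IsCap C ∧ ∀ D : Finset (Fin n → ZMod 3), IsCap D → D.card ≤ C.card

set_option synthInstance.maxSize 2000 in
set_option synthInstance.maxHeartbeats 200000 in
set_option maxRecDepth 100000 in
/-- The affine map with base point `p` and independent directions `a`, `b`. -/
lemma exists_affine (p a b : Fin 2 → ZMod 3) (ha : a ≠ 0) (hb : b ≠ 0) (hab : a ≠ b)
    (hs : a + b ≠ 0) : ∃ T : (Fin 2 → ZMod 3) ≃ᵃ[ZMod 3] (Fin 2 → ZMod 3),
      ∀ x, T x = x 0 • a + x 1 • b + p := by
  have key : ∀ a0 a1 b0 b1 : ZMod 3, ¬ (a0 = 0 ∧ a1 = 0) → ¬ (b0 = 0 ∧ b1 = 0) →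
      ¬ (a0 = b0 ∧ a1 = b1) → ¬ (a0 + b0 = 0 ∧ a1 + b1 = 0) → ∀ x0 x1 : ZMod 3,
      x0 * a0 + x1 * b0 = 0 → x0 * a1 + x1 * b1 = 0 → x0 = 0 ∧ x1 = 0 := by decide
  let f : (Fin 2 → ZMod 3) →ₗ[ZMod 3] (Fin 2 → ZMod 3) :=
    { toFun := fun x => x 0 • a + x 1 • b
      map_add' := by intro x y; simp only [Pi.add_apply, add_smul]; abel
      map_smul' := by
        intro c x
        simp only [Pi.smul_apply, smul_eq_mul, mul_smul, smul_add, RingHom.id_apply] }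
  have hf : Function.Injective f := by
    rw [← LinearMap.ker_eq_bot, LinearMap.ker_eq_bot']
    intro x hx
    have h0 := congrFun hx 0
    have h1 := congrFun hx 1
    simp only [f, LinearMap.coe_mk, AddHom.coe_mk, Pi.add_apply, Pi.smul_apply, smul_eq_mul,
      Pi.zero_apply] at h0 h1
    simp only [ne_eq, funext_iff, Fin.forall_fin_two, Pi.add_apply, Pi.zero_apply] at ha hb hab hs
    have := key _ _ _ _ ha hb hab hs _ _ h0 h1
    rw [funext_iff, Fin.forall_fin_two]
    exact this
  refine ⟨(LinearEquiv.ofInjectiveEndo f hf).toAffineEquiv.trans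
    (AffineEquiv.constVAdd (ZMod 3) _ p), fun x => ?_⟩
  simp only [AffineEquiv.trans_apply, LinearEquiv.coe_toAffineEquiv,
    LinearEquiv.coe_ofInjectiveEndo, AffineEquiv.constVAdd_apply, vadd_eq_add]
  rw [add_comm]
  rfl

/-- The standard cap of size four. -/
def stdCap : Finset (Fin 2 → ZMod 3) := {![0, 0], ![1, 0], ![0, 1], ![1, 1]}

lemma stdCap_isCap : IsCap stdCap := by
  unfold IsCap stdCap; decide

lemma three_eq (v : Fin 2 → ZMod 3) : v + v + v = 0 := by
  revert v; decide

lemma image_std (T : (Fin 2 → ZMod 3) → (Fin 2 → ZMod 3)) (p a b : Fin 2 → ZMod 3)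
    (hT : ∀ x, T x = x 0 • a + x 1 • b + p) :
    stdCap.image T = {p, a + p, b + p, a + b + p} := by
  simp [stdCap, Finset.image_insert, hT]

set_option synthInstance.maxSize 2000 in
set_option synthInstance.maxHeartbeats 200000 in
set_option maxRecDepth 100000 in
/-- The fourth point of a cap through `0`, `e₁`, `e₂`. -/
lemma fourth : ∀ x : Fin 2 → ZMod 3, x ≠ ![0, 0] → x ≠ ![1, 0] → x ≠ ![0, 1] →
    ![0, 0] + ![1, 0] + x ≠ 0 → ![0, 0] + ![0, 1] + x ≠ 0 → ![1, 0] + ![0, 1] + x ≠ 0 →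
    x = ![1, 1] ∨ x = ![1, 2] ∨ x = ![2, 1] := by decide

lemma cap_std (C : Finset (Fin 2 → ZMod 3)) (hC : IsCap C) (h4 : 4 ≤ C.card)
    (h0 : ![0, 0] ∈ C) (h1 : ![1, 0] ∈ C) (h2 : ![0, 1] ∈ C) :
    ∃ T : (Fin 2 → ZMod 3) ≃ᵃ[ZMod 3] (Fin 2 → ZMod 3), stdCap.image (fun x => T x) = C := by
  have F : ∀ x ∈ C, x = ![0, 0] ∨ x = ![1, 0] ∨ x = ![0, 1] ∨
      x = ![1, 1] ∨ x = ![1, 2] ∨ x = ![2, 1] := by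
    intro x hx
    by_cases a0 : x = ![0, 0]
    · tauto
    by_cases a1 : x = ![1, 0]
    · tauto
    by_cases a2 : x = ![0, 1]
    · tauto
    have := fourth x a0 a1 a2 (hC _ h0 _ h1 _ hx (by decide) (Ne.symm a0) (Ne.symm a1))
      (hC _ h0 _ h2 _ hx (by decide) (Ne.symm a0) (Ne.symm a2))
      (hC _ h1 _ h2 _ hx (by decide) (Ne.symm a1) (Ne.symm a2))
    tauto
  have n1 : ![1, 1] ∈ C → ![1, 2] ∉ C := fun h h' =>
    hC _ h1 _ h _ h' (by decide) (by decide) (by decide) (by decide)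
  have n2 : ![1, 1] ∈ C → ![2, 1] ∉ C := fun h h' =>
    hC _ h2 _ h _ h' (by decide) (by decide) (by decide) (by decide)
  have n3 : ![1, 2] ∈ C → ![2, 1] ∉ C := fun h h' =>
    hC _ h0 _ h _ h' (by decide) (by decide) (by decide) (by decide)
  obtain ⟨x, hx, hx'⟩ : ∃ x ∈ C, x ∉ ({![0, 0], ![1, 0], ![0, 1]} : Finset (Fin 2 → ZMod 3)) := by
    apply Finset.exists_mem_notMem_of_card_lt_card
    exact lt_of_le_of_lt Finset.card_le_three (by omega)
  simp only [Finset.mem_insert, Finset.mem_singleton, not_or] at hx'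
  have hCx : C = {![0, 0], ![1, 0], ![0, 1], x} := by
    ext y
    simp only [Finset.mem_insert, Finset.mem_singleton]
    constructor
    · intro hy
      rcases F x hx with h | h | h | h | h | h <;> rcases F y hy with g | g | g | g | g | g <;>
        subst h <;> subst g <;> tauto
    · rintro (h | h | h | h) <;> subst h <;> assumption
  have hx3 : x = ![1, 1] ∨ x = ![1, 2] ∨ x = ![2, 1] := by have := F x hx; tauto
  rw [hCx]
  rcases hx3 with rfl | rfl | rfl
  · obtain ⟨T, hT⟩ := exists_affine ![0, 0] ![1, 0] ![0, 1] (by decide) (by decide) (by decide)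
      (by decide)
    exact ⟨T, by rw [image_std _ _ _ _ hT]; decide⟩
  · obtain ⟨T, hT⟩ := exists_affine ![0, 0] ![0, 1] ![1, 2] (by decide) (by decide) (by decide)
      (by decide)
    exact ⟨T, by rw [image_std _ _ _ _ hT]; decide⟩
  · obtain ⟨T, hT⟩ := exists_affine ![0, 0] ![1, 0] ![2, 1] (by decide) (by decide) (by decide)
      (by decide)
    exact ⟨T, by rw [image_std _ _ _ _ hT]; decide⟩

lemma cap_equiv_std (C : Finset (Fin 2 → ZMod 3)) (hC : IsCap C) (h4 : 4 ≤ C.card) :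
    ∃ T : (Fin 2 → ZMod 3) ≃ᵃ[ZMod 3] (Fin 2 → ZMod 3), stdCap.image (fun x => T x) = C := by
  obtain ⟨p, q, r, hp, hq, hr, hpq, hpr, hqr⟩ := Finset.two_lt_card_iff.1 (by omega : 2 < C.card)
  have hsum := hC p hp q hq r hr hpq hpr hqr
  obtain ⟨T, hT⟩ := exists_affine p (q - p) (r - p) (sub_ne_zero.2 hpq.symm)
    (sub_ne_zero.2 hpr.symm) (fun h => hqr (sub_left_injective h)) (by
      intro h
      apply hsum
      have h3 := three_eq p
      calc p + q + r = (q - p + (r - p)) + (p + p + p) := by abel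
        _ = 0 := by rw [h, h3, add_zero])
  have hTinj := T.injective
  set C' := C.image (fun x => T.symm x) with hC'
  have hmem : ∀ x, x ∈ C' ↔ T x ∈ C := by
    intro x
    simp only [hC', Finset.mem_image]
    constructor
    · rintro ⟨y, hy, rfl⟩
      simpa using hy
    · intro h
      exact ⟨T x, h, by simp⟩
  have hcap : IsCap C' := by
    intro x hx y hy z hz hxy hxz hyz h
    rw [hmem] at hx hy hz
    refine hC _ hx _ hy _ hz (hTinj.ne hxy) (hTinj.ne hxz) (hTinj.ne hyz) ?_
    have e0 : x 0 + y 0 + z 0 = 0 := congrFun h 0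
    have e1 : x 1 + y 1 + z 1 = 0 := congrFun h 1
    have h3 := three_eq p
    calc T x + T y + T z = (x 0 + y 0 + z 0) • (q - p) + (x 1 + y 1 + z 1) • (r - p)
          + (p + p + p) := by rw [hT, hT, hT]; simp only [add_smul]; abel
      _ = 0 := by rw [e0, e1, h3]; simp
  have hcard : C'.card = C.card := Finset.card_image_of_injective _ T.symm.injective
  obtain ⟨U, hU⟩ := cap_std C' hcap (by omega) (by rw [hmem, hT]; simpa using hp)
    (by rw [hmem, hT]; simpa using hq) (by rw [hmem, hT]; simpa using hr)
  refine ⟨U.trans T, ?_⟩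
  have : stdCap.image (fun x => (U.trans T) x) = (stdCap.image (fun x => U x)).image
      (fun x => T x) := by
    rw [Finset.image_image]; rfl
  rw [this, hU, hC', Finset.image_image]
  have hid : (fun x => T x) ∘ (fun x => T.symm x) = id := by
    ext1 x
    simp
  rw [hid, Finset.image_id]

/-- Any two maximal caps in `AG(2,3)` are affinely equivalent. -/
theorem maximal_caps_AG23_affinely_equivalent
    (C D : Finset (Fin 2 → ZMod 3)) (hC : MaximalCap C) (hD : MaximalCap D) :
    ∃ T : (Fin 2 → ZMod 3) ≃ᵃ[ZMod 3] (Fin 2 → ZMod 3),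
      C.image (fun x => T x) = D := by
  have hs : stdCap.card = 4 := by decide
  obtain ⟨T, hT⟩ := cap_equiv_std C hC.1 (hs ▸ hC.2 _ stdCap_isCap)
  obtain ⟨U, hU⟩ := cap_equiv_std D hD.1 (hs ▸ hD.2 _ stdCap_isCap)
  refine ⟨T.symm.trans U, ?_⟩
  rw [← hT, ← hU, Finset.image_image]
  congr 1
  ext1 x
  simp
end

section
/- Any two maximal caps in AG(3,3) are affinely equivalent. -/
namespace CapSearch

/-- Affine equivalence of finite point sets. -/
def Aeq (C D : Finset (Fin 3 → ZMod 3)) : Prop :=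
  ∃ T : (Fin 3 → ZMod 3) ≃ᵃ[ZMod 3] (Fin 3 → ZMod 3), C.image (fun x => T x) = D

theorem Aeq.symm {C D : Finset (Fin 3 → ZMod 3)} (h : Aeq C D) : Aeq D C := by
  obtain ⟨T, rfl⟩ := h
  refine ⟨T.symm, ?_⟩
  rw [Finset.image_image]
  ext x
  simp

theorem Aeq.trans {C D E : Finset (Fin 3 → ZMod 3)} (h : Aeq C D) (h' : Aeq D E) : Aeq C E := by
  obtain ⟨T, rfl⟩ := h
  obtain ⟨S, rfl⟩ := h'
  refine ⟨T.trans S, ?_⟩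
  rw [Finset.image_image]
  ext x
  simp

/-- The elliptic paraboloid, the standard 9-cap. -/
def Q : Finset (Fin 3 → ZMod 3) :=
  Finset.univ.filter (fun x => x 2 = x 0 * x 0 + x 1 * x 1)

theorem Q_card : Q.card = 9 := by decide +kernel

theorem Q_cap : IsCap Q := by
  intro x hx y hy z hz hxy _ _ h
  simp only [Q, Finset.mem_filter, Finset.mem_univ, true_and] at hx hy hz
  have h0 : x 0 + y 0 + z 0 = 0 := congrFun h 0
  have h1 : x 1 + y 1 + z 1 = 0 := congrFun h 1
  have h2 : x 2 + y 2 + z 2 = 0 := congrFun h 2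
  rw [hx, hy, hz] at h2
  have key : ∀ a b c d : ZMod 3, a * a + b * b + (c * c + d * d)
      + ((-a - c) * (-a - c) + (-b - d) * (-b - d)) = 0 → a = c ∧ b = d := by decide
  have e0 : z 0 = - x 0 - y 0 := by linear_combination h0
  have e1 : z 1 = - x 1 - y 1 := by linear_combination h1
  rw [e0, e1] at h2
  obtain ⟨a, b⟩ := key _ _ _ _ h2
  apply hxy
  funext i
  fin_cases i
  · exact a
  · exact b
  · change x 2 = y 2
    rw [hx, hy, a, b]

/-- Decoding of a number below 27 as a point, by base 3 digits. -/
def dec (n : ℕ) : Fin 3 → ZMod 3 :=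
  ![((n % 3 : ℕ) : ZMod 3), ((n / 3 % 3 : ℕ) : ZMod 3), ((n / 9 : ℕ) : ZMod 3)]

def enc (x : Fin 3 → ZMod 3) : ℕ := (x 0).val + 3 * (x 1).val + 9 * (x 2).val

theorem enc_dec : ∀ n < 27, enc (dec n) = n := by decide +kernel
theorem dec_enc : ∀ x, dec (enc x) = x := by decide +kernel
theorem enc_lt : ∀ x, enc x < 27 := by decide +kernel

/-- Code of the third point on the line through two points. -/
def third (p q : ℕ) : ℕ :=
  (2 * (p % 3 + q % 3)) % 3 + 3 * ((2 * (p / 3 % 3 + q / 3 % 3)) % 3)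
    + 9 * ((2 * (p / 9 + q / 9)) % 3)

theorem third_spec : ∀ p < 27, ∀ q < 27, dec p + dec q + dec (third p q) = 0 := by
  decide +kernel

theorem cap_third {C : Finset (Fin 3 → ZMod 3)} (hC : IsCap C) {p q : ℕ} (hp : p < 27)
    (hq : q < 27) (hpC : dec p ∈ C) (hqC : dec q ∈ C) (hpq : q ≠ p) : dec (third p q) ∉ C := by
  intro h
  have hs := third_spec p hp q hq
  have hne : dec p ≠ dec q := by
    intro e
    apply hpq
    rw [← enc_dec p hp, ← enc_dec q hq, e]
  have h3 : ∀ a b : ZMod 3, a + b + a = 0 → a = b := by decide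
  have h4 : ∀ a b : ZMod 3, a + b + b = 0 → a = b := by decide
  refine hC _ hpC _ hqC _ h hne ?_ ?_ hs
  · intro e
    rw [← e] at hs
    exact hne (funext fun i => h3 _ _ (congrFun hs i))
  · intro e
    rw [← e] at hs
    exact hne (funext fun i => h4 _ _ (congrFun hs i))

abbrev Nine := ℕ × ℕ × ℕ × ℕ × ℕ × ℕ × ℕ × ℕ × ℕ

/-- Matrices (row by row) carrying the 9-caps through the standard frame to the paraboloid. -/
def table : List Nine :=
  [(1, 2, 2, 0, 0, 1, 1, 1, 2),
   (1, 2, 1, 0, 0, 1, 1, 1, 2),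
   (1, 2, 0, 0, 0, 1, 1, 1, 1),
   (1, 2, 2, 0, 1, 0, 1, 2, 1),
   (1, 2, 1, 0, 1, 2, 1, 2, 2),
   (1, 2, 1, 0, 1, 1, 1, 2, 2),
   (1, 2, 0, 0, 1, 2, 1, 2, 1),
   (1, 2, 0, 0, 1, 1, 1, 2, 1),
   (1, 1, 2, 0, 1, 2, 1, 2, 2),
   (1, 1, 2, 0, 1, 0, 1, 2, 1),
   (1, 1, 2, 0, 1, 1, 1, 2, 2),
   (1, 1, 1, 0, 1, 2, 1, 2, 2),
   (1, 1, 0, 0, 1, 2, 1, 2, 1),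
   (1, 0, 2, 0, 1, 2, 1, 1, 2),
   (1, 0, 2, 0, 1, 1, 1, 1, 2),
   (1, 0, 2, 0, 1, 0, 1, 1, 1),
   (1, 0, 1, 0, 1, 2, 1, 1, 2),
   (1, 0, 0, 0, 1, 2, 1, 1, 1)]

def lin : Nine → (Fin 3 → ZMod 3) →ₗ[ZMod 3] (Fin 3 → ZMod 3)
  | (a, b, c, d, e, f, g, h, i) =>
    Matrix.toLin' !![(a : ZMod 3), b, c; d, e, f; g, h, i]

def detOk : Nine → Bool
  | (a, b, c, d, e, f, g, h, i) =>
    ((a * e * i + b * f * g + c * d * h + 2 * (a * f * h + b * d * i + c * e * g)) % 3 != 0)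

theorem table_det : ∀ M ∈ table, detOk M = true := by decide +kernel

theorem cast_mod_three {n : ℕ} : n % 3 = 0 ↔ (n : ZMod 3) = 0 := by
  rw [ZMod.natCast_eq_zero_iff, Nat.dvd_iff_mod_eq_zero]

theorem two_eq : (2 : ZMod 3) = -1 := by decide

theorem lin_inj (M : Nine) (h : detOk M = true) : Function.Injective (lin M) := by
  obtain ⟨a, b, c, d, e, f, g, h', i⟩ := M
  have hd : IsUnit (!![(a : ZMod 3), b, c; d, e, f; g, h', i]) := by
    rw [Matrix.isUnit_iff_isUnit_det, isUnit_iff_ne_zero]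
    intro h0
    simp only [detOk, bne_iff_ne, ne_eq] at h
    apply h
    rw [cast_mod_three]
    push_cast
    rw [Matrix.det_fin_three] at h0
    simp at h0
    rw [two_eq]
    linear_combination h0
  exact Matrix.mulVec_injective_iff_isUnit.2 hd

/-- Test whether the image of a coded point under a matrix lies on the paraboloid. -/
def onQ : Nine → ℕ → Bool
  | (a, b, c, d, e, f, g, h, i), p =>
    let x := p % 3
    let y := p / 3 % 3
    let z := p / 9
    Nat.beq (((a * x + b * y + c * z) * (a * x + b * y + c * z)
      + (d * x + e * y + f * z) * (d * x + e * y + f * z) + 2 * (g * x + h * y + i * z)) % 3) 0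

theorem onQ_spec (M : Nine) (p : ℕ) (hM : onQ M p = true) : lin M (dec p) ∈ Q := by
  obtain ⟨a, b, c, d, e, f, g, h, i⟩ := M
  simp only [onQ, Nat.beq_eq] at hM
  rw [cast_mod_three] at hM
  push_cast at hM
  rw [two_eq] at hM
  simp only [Q, Finset.mem_filter, Finset.mem_univ, true_and, lin, Matrix.toLin'_apply, dec,
    Matrix.mulVec, dotProduct, Fin.sum_univ_three]
  simp
  simp at hM
  linear_combination -hM

/-- Exhaustive search over the completions of a partial cap. -/
def search : ℕ → List ℕ → List ℕ → Bool
  | 0, _, _ => false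
  | _ + 1, [], ch => Nat.ble ch.length 8 || table.any (fun M => ch.all (onQ M))
  | n + 1, p :: rest, ch =>
    Nat.ble (ch.length + rest.length + 1) 8 ||
      (search n rest ch &&
        search n (rest.filter (fun r => ch.all (fun q => Nat.beq q p || !(Nat.beq (third p q) r))))
          (p :: ch))

theorem card_le {C : Finset (Fin 3 → ZMod 3)} (l : List ℕ) (h : ∀ x ∈ C, enc x ∈ l) :
    C.card ≤ l.length := by
  have h1 : C ⊆ l.toFinset.image dec := by
    intro x hx
    rw [Finset.mem_image]
    exact ⟨enc x, by simpa using h x hx, dec_enc x⟩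
  exact (Finset.card_le_card h1).trans (Finset.card_image_le.trans l.toFinset_card_le)

theorem search_sound {C : Finset (Fin 3 → ZMod 3)} (hC : IsCap C) (h9 : 9 ≤ C.card) :
    ∀ (n : ℕ) (rest ch : List ℕ), search n rest ch = true →
      (∀ q ∈ ch, q < 27 ∧ dec q ∈ C) → (∀ q ∈ rest, q < 27) →
      (∀ x ∈ C, enc x ∈ ch ∨ enc x ∈ rest) → Aeq C Q := by
  intro n
  induction n with
  | zero => intro rest ch h; simp [search] at h
  | succ n ih =>
    intro rest ch h hch hrest hcov
    have hcard := card_le (C := C) (ch ++ rest) (by simpa using hcov)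
    rw [List.length_append] at hcard
    cases rest with
    | nil =>
      simp only [search, Bool.or_eq_true, Nat.ble_eq, List.any_eq_true, List.all_eq_true] at h
      rcases h with h | ⟨M, hM, h⟩
      · simp at hcard
        omega
      · have hinj := lin_inj M (table_det M hM)
        refine ⟨(LinearEquiv.ofInjectiveEndo (lin M) hinj).toAffineEquiv, ?_⟩
        apply Finset.eq_of_subset_of_card_le
        · intro y hy
          obtain ⟨x, hx, rfl⟩ := Finset.mem_image.1 hy
          have hx' : enc x ∈ ch := by simpa using hcov x hx
          have := onQ_spec M _ (h _ hx')
          rw [dec_enc] at this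
          exact this
        · rw [Q_card, Finset.card_image_of_injective _ (AffineEquiv.injective _)]
          exact h9
    | cons p rest =>
      simp only [search, Bool.or_eq_true, Bool.and_eq_true, Nat.ble_eq] at h
      rcases h with h | ⟨h1, h2⟩
      · simp at hcard
        omega
      · have hp : p < 27 := hrest p (by simp)
        by_cases hpC : dec p ∈ C
        · refine ih _ _ h2 ?_ ?_ ?_
          · intro q hq
            rcases List.mem_cons.1 hq with rfl | hq
            · exact ⟨hp, hpC⟩
            · exact hch q hq
          · intro q hq
            exact hrest q (List.mem_cons_of_mem _ (List.mem_filter.1 hq).1)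
          · intro x hx
            rcases hcov x hx with hx' | hx'
            · exact Or.inl (List.mem_cons_of_mem _ hx')
            · rcases List.mem_cons.1 hx' with hx' | hx'
              · exact Or.inl (by simp [hx'])
              · right
                rw [List.mem_filter, List.all_eq_true]
                refine ⟨hx', fun q hq => ?_⟩
                by_cases hqp : q = p
                · simp [hqp]
                · have := cap_third hC hp (hch q hq).1 hpC (hch q hq).2 hqp
                  have hne : third p q ≠ enc x := by
                    intro e
                    rw [e, dec_enc] at this
                    exact this hx
                  have hb : (third p q).beq (enc x) = false := by
                    rw [Bool.eq_false_iff, ne_eq, Nat.beq_eq]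
                    exact hne
                  rw [hb, Bool.not_false, Bool.or_true]
        · refine ih _ _ h1 hch (fun q hq => hrest q (by simp [hq])) ?_
          intro x hx
          rcases hcov x hx with hx' | hx'
          · exact Or.inl hx'
          · rcases List.mem_cons.1 hx' with hx' | hx'
            · exact absurd (by rw [← hx', dec_enc]; exact hx) hpC
            · exact Or.inr hx'

theorem search_true : search 30
    [4, 5, 7, 10, 11, 12, 13, 14, 15, 16, 17, 19, 21, 22, 23, 25, 26] [0, 1, 3, 9] = true := by
  decide +kernel

theorem third_frame : ∀ n < 27, n ∈ [0, 1, 3, 9] ∨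
    n ∈ [4, 5, 7, 10, 11, 12, 13, 14, 15, 16, 17, 19, 21, 22, 23, 25, 26] ∨
    ∃ p ∈ [0, 1, 3, 9], ∃ q ∈ [0, 1, 3, 9], q ≠ p ∧ third p q = n := by
  decide +kernel

/-- A cap with at least nine points through the standard frame is standard. -/
theorem frame_case {C : Finset (Fin 3 → ZMod 3)} (hC : IsCap C) (h9 : 9 ≤ C.card)
    (h0 : ∀ n ∈ [0, 1, 3, 9], dec n ∈ C) : Aeq C Q := by
  have hlt : ∀ n ∈ [0, 1, 3, 9], n < 27 := by decide
  refine search_sound hC h9 _ _ _ search_true (fun q hq => ⟨hlt q hq, h0 q hq⟩) (by decide) ?_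
  intro x hx
  rcases third_frame _ (enc_lt x) with h | h | ⟨p, hp, q, hq, hqp, h⟩
  · exact Or.inl h
  · exact Or.inr h
  · have := cap_third hC (hlt p hp) (hlt q hq) (h0 p hp) (h0 q hq) hqp
    rw [h, dec_enc] at this
    exact absurd hx this

theorem isCap_image {C : Finset (Fin 3 → ZMod 3)} (hC : IsCap C)
    (T : (Fin 3 → ZMod 3) ≃ᵃ[ZMod 3] (Fin 3 → ZMod 3)) : IsCap (C.image (fun x => T x)) := by
  intro x hx y hy z hz hxy hxz hyz h
  obtain ⟨x, hxC, rfl⟩ := Finset.mem_image.1 hx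
  obtain ⟨y, hyC, rfl⟩ := Finset.mem_image.1 hy
  obtain ⟨z, hzC, rfl⟩ := Finset.mem_image.1 hz
  refine hC x hxC y hyC z hzC (fun e => hxy (by rw [e])) (fun e => hxz (by rw [e]))
    (fun e => hyz (by rw [e])) ?_
  have hT : ∀ v, T v = T.linear v + T 0 := by
    intro v
    have := T.map_vadd 0 v
    simpa using this
  simp only [hT x, hT y, hT z] at h
  have h3 : T 0 + T 0 + T 0 = 0 := by
    funext i
    have : ∀ a : ZMod 3, a + a + a = 0 := by decide
    exact this _
  have : T.linear (x + y + z) = 0 := by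
    rw [map_add, map_add]
    calc _ = (T.linear x + T 0 + (T.linear y + T 0) + (T.linear z + T 0))
          - (T 0 + T 0 + T 0) := by abel
      _ = 0 := by rw [h, h3, sub_zero]
  exact T.linear.map_eq_zero_iff.1 this

/-- Linear map sending the standard basis to three given vectors. -/
def comb (u v w : Fin 3 → ZMod 3) : (Fin 3 → ZMod 3) →ₗ[ZMod 3] (Fin 3 → ZMod 3) :=
  Fintype.linearCombination (ZMod 3) ![u, v, w]

theorem comb_apply (u v w x : Fin 3 → ZMod 3) :
    comb u v w x = x 0 • u + x 1 • v + x 2 • w := by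
  simp [comb, Fintype.linearCombination_apply, Fin.sum_univ_three]

theorem exists_frame {C : Finset (Fin 3 → ZMod 3)} (hC : IsCap C) (h9 : 9 ≤ C.card) :
    ∃ p u v w : Fin 3 → ZMod 3, p ∈ C ∧ u + p ∈ C ∧ v + p ∈ C ∧ w + p ∈ C ∧
      Function.Injective (comb u v w) := by
  obtain ⟨p, hp⟩ : C.Nonempty := Finset.card_pos.1 (by omega)
  obtain ⟨p1, hp1, h1⟩ := Finset.exists_mem_notMem_of_card_lt_card
    (s := {p}) (t := C) (by simp; omega)
  obtain ⟨p2, hp2, h2⟩ := Finset.exists_mem_notMem_of_card_lt_card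
    (s := {p, p1}) (t := C) (lt_of_le_of_lt Finset.card_le_two (by omega))
  let pl : Finset (Fin 3 → ZMod 3) :=
    ((Finset.univ : Finset (ZMod 3 × ZMod 3)).erase (2, 0)).image
      (fun t => p + (t.1 • (p1 - p) + t.2 • (p2 - p)))
  have hpl : pl.card < C.card := by
    refine lt_of_le_of_lt Finset.card_image_le (lt_of_lt_of_le ?_ h9)
    decide
  obtain ⟨p3, hp3, h3⟩ := Finset.exists_mem_notMem_of_card_lt_card hpl
  simp only [Finset.mem_singleton] at h1
  simp only [Finset.mem_insert, Finset.mem_singleton, not_or] at h2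
  have line : ∀ q ∈ C, q ≠ p → q ≠ p1 → q - p ≠ (2 : ZMod 3) • (p1 - p) := by
    intro q hq hqp hqp1 e
    refine hC p hp p1 hp1 q hq (Ne.symm h1) (Ne.symm hqp) (Ne.symm hqp1) ?_
    funext i
    have := congrFun e i
    have aux : ∀ a b c : ZMod 3, c - a = 2 * (b - a) → a + b + c = 0 := by decide
    exact aux _ _ _ this
  refine ⟨p, p1 - p, p2 - p, p3 - p, hp, by simpa, by simpa, by simpa, ?_⟩
  have hu : p1 - p ≠ 0 := sub_ne_zero.2 h1
  have hv : ∀ a : ZMod 3, p2 - p ≠ a • (p1 - p) := by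
    intro a
    have h' := line p2 hp2 h2.1 h2.2
    have ha : a = 0 ∨ a = 1 ∨ a = 2 := by revert a; decide
    rcases ha with rfl | rfl | rfl
    · simpa using sub_ne_zero.2 h2.1
    · simpa using h2.2
    · exact h'
  have hw' : ∀ a b : ZMod 3, (a, b) ≠ (2, 0) → p3 - p ≠ a • (p1 - p) + b • (p2 - p) := by
    intro a b hab e
    apply h3
    refine Finset.mem_image.2 ⟨(a, b), by simp [hab], ?_⟩
    simp only [← e]
    abel
  have hw : ∀ a b : ZMod 3, p3 - p ≠ a • (p1 - p) + b • (p2 - p) := by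
    intro a b
    by_cases hab : (a, b) = (2, 0)
    · obtain ⟨rfl, rfl⟩ := Prod.mk.inj hab
      have := line p3 hp3 (fun e => hw' 0 0 (by decide) (by simp [e]))
        (fun e => hw' 1 0 (by decide) (by simp [e]))
      simpa using this
    · exact hw' a b hab
  generalize p1 - p = u at *
  generalize p2 - p = v at *
  generalize p3 - p = w at *
  have : Fact (Nat.Prime 3) := ⟨Nat.prime_three⟩
  rw [injective_iff_map_eq_zero]
  intro x hx
  rw [comb_apply] at hx
  have x2 : x 2 = 0 := by
    by_contra hne
    apply hw (-(x 2)⁻¹ * x 0) (-(x 2)⁻¹ * x 1)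
    have : w = (x 2)⁻¹ • (x 2 • w) := by rw [smul_smul, inv_mul_cancel₀ hne, one_smul]
    rw [this, show x 2 • w = -(x 0 • u + x 1 • v) from (neg_eq_of_add_eq_zero_right hx).symm]
    module
  rw [x2, zero_smul, add_zero] at hx
  have x1 : x 1 = 0 := by
    by_contra hne
    apply hv (-(x 1)⁻¹ * x 0)
    have : v = (x 1)⁻¹ • (x 1 • v) := by rw [smul_smul, inv_mul_cancel₀ hne, one_smul]
    rw [this, show x 1 • v = -(x 0 • u) from (neg_eq_of_add_eq_zero_right hx).symm]
    module
  rw [x1, zero_smul, add_zero] at hx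
  have x0 : x 0 = 0 := by
    rcases smul_eq_zero.1 hx with h | h
    · exact h
    · exact absurd h hu
  funext i
  fin_cases i
  · exact x0
  · exact x1
  · exact x2

theorem cap_standard {C : Finset (Fin 3 → ZMod 3)} (hC : IsCap C) (h9 : 9 ≤ C.card) :
    Aeq C Q := by
  obtain ⟨p, u, v, w, hp, hu, hv, hw, hinj⟩ := exists_frame hC h9
  let T : (Fin 3 → ZMod 3) ≃ᵃ[ZMod 3] (Fin 3 → ZMod 3) :=
    (LinearEquiv.ofInjectiveEndo (comb u v w) hinj).toAffineEquiv.trans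
      (AffineEquiv.constVAdd (ZMod 3) (Fin 3 → ZMod 3) p)
  have hT : ∀ x, T x = p + (x 0 • u + x 1 • v + x 2 • w) := by
    intro x
    rw [← comb_apply]
    rfl
  have hA : Aeq C (C.image (fun x => T.symm x)) := ⟨T.symm, rfl⟩
  refine hA.trans (frame_case (isCap_image hC T.symm) ?_ ?_)
  · rw [Finset.card_image_of_injective _ (AffineEquiv.injective _)]
    exact h9
  · have key : ∀ n, T (dec n) ∈ C → dec n ∈ C.image (fun x => T.symm x) := by
      intro n hn
      exact Finset.mem_image.2 ⟨_, hn, by simp⟩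
    intro n hn
    apply key
    have d0 : dec 0 = ![0, 0, 0] := by decide
    have d1 : dec 1 = ![1, 0, 0] := by decide
    have d3 : dec 3 = ![0, 1, 0] := by decide
    have d9 : dec 9 = ![0, 0, 1] := by decide
    simp only [List.mem_cons, List.not_mem_nil, or_false] at hn
    rcases hn with rfl | rfl | rfl | rfl
    · rw [hT, d0]; simpa using hp
    · rw [hT, d1]; simpa [add_comm] using hu
    · rw [hT, d3]; simpa [add_comm] using hv
    · rw [hT, d9]; simpa [add_comm] using hw

end CapSearch

/-- Any two maximal caps in `AG(3,3)` are affinely equivalent. -/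
theorem maximal_caps_AG33_affinely_equivalent
    (C D : Finset (Fin 3 → ZMod 3)) (hC : MaximalCap C) (hD : MaximalCap D) :
    ∃ T : (Fin 3 → ZMod 3) ≃ᵃ[ZMod 3] (Fin 3 → ZMod 3),
      C.image (fun x => T x) = D := by
  have h : ∀ E : Finset (Fin 3 → ZMod 3), MaximalCap E → CapSearch.Aeq E CapSearch.Q := by
    intro E hE
    refine CapSearch.cap_standard hE.1 ?_
    have := hE.2 _ CapSearch.Q_cap
    rwa [CapSearch.Q_card] at this
  exact (h C hC).trans (h D hD).symm
end

section
/- For every maximal cap C in AG(3,3), the sum of the coordinate vectors of the points of C is the zero vector (mod 3). -/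
/-- Boolean form of the bound on caps in the affine plane: the hypotheses are the 12 lines. -/
theorem plane_bool : ∀ b00 b01 b02 b10 b11 b12 b20 b21 b22 : Bool,
    ((b00 && b01 && b02) ||
      (b00 && b10 && b20) ||
      (b00 && b11 && b22) ||
      (b00 && b12 && b21) ||
      (b01 && b10 && b22) ||
      (b01 && b11 && b21) ||
      (b01 && b12 && b20) ||
      (b02 && b10 && b21) ||
      (b02 && b11 && b20) ||
      (b02 && b12 && b22) ||
      (b10 && b11 && b12) ||
      (b20 && b21 && b22)) = false →
    b00.toNat + b01.toNat + b02.toNat + (b10.toNat + b11.toNat + b12.toNat) +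
      (b20.toNat + b21.toNat + b22.toNat) ≤ 4 := by
  decide +kernel

/-- Caps in the affine plane have at most four points. -/
theorem plane_aux (S : Finset (ZMod 3 × ZMod 3))
    (hS : ∀ x ∈ S, ∀ y ∈ S, x ≠ y → -(x + y) ∈ S → -(x + y) = x ∨ -(x + y) = y) :
    S.card ≤ 4 := by
  have hl : ∀ x y z : ZMod 3 × ZMod 3, x + y + z = 0 → x ≠ y → z ≠ x → z ≠ y →
      (decide (x ∈ S) && decide (y ∈ S) && decide (z ∈ S)) = false := by
    intro x y z h hxy hzx hzy
    by_contra hc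
    simp only [Bool.not_eq_false, Bool.and_eq_true, decide_eq_true_eq] at hc
    obtain rfl : z = -(x + y) := by rw [eq_neg_iff_add_eq_zero, add_comm]; exact h
    rcases hS x hc.1.1 y hc.1.2 hxy hc.2 with h | h
    exacts [hzx h, hzy h]
  have e : ∀ f : ZMod 3 → ℕ, ∑ c : ZMod 3, f c = f 0 + f 1 + f 2 := fun f => Fin.sum_univ_three f
  have hcard : S.card = ∑ p : ZMod 3 × ZMod 3, (decide (p ∈ S)).toNat := by
    simp [Bool.toNat, Bool.cond_decide]
  rw [hcard, Fintype.sum_prod_type, e, e, e, e]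
  apply plane_bool
  simp only [Bool.or_eq_false_iff]
  refine ⟨⟨⟨⟨⟨⟨⟨⟨⟨⟨⟨?_, ?_⟩, ?_⟩, ?_⟩, ?_⟩, ?_⟩, ?_⟩, ?_⟩, ?_⟩, ?_⟩, ?_⟩, ?_⟩ <;>
    exact hl _ _ _ (by decide) (by decide) (by decide) (by decide)

/-- A plane section that projects injectively to two coordinates `j`, `k` has at most 4 points. -/
theorem plane_aux2 (C : Finset (Fin 3 → ZMod 3)) (hC : IsCap C) (P : (Fin 3 → ZMod 3) → Prop)
    [DecidablePred P] (j k : Fin 3)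
    (hP : ∀ x y z, P x → P y → P z → x j + y j + z j = 0 → x k + y k + z k = 0 → x + y + z = 0) :
    (C.filter P).card ≤ 4 := by
  have three : ∀ u : ZMod 3, u + u + u = 0 := by decide
  have inj : Set.InjOn (fun x : Fin 3 → ZMod 3 => (x j, x k)) (C.filter P : Finset _) := by
    intro x hx y hy hxy
    simp only [Finset.coe_filter, Set.mem_ofPred_eq] at hx hy
    simp only [Prod.mk.injEq] at hxy
    have h := hP x x y hx.2 hx.2 hy.2 (by rw [← hxy.1, three]) (by rw [← hxy.2, three])
    have h2 : x + x + x = 0 := by funext i; exact three (x i)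
    exact (add_left_cancel (h.trans h2.symm)).symm
  rw [← Finset.card_image_of_injOn inj]
  apply plane_aux
  intro x hx y hy hxy hz
  by_contra! hne
  obtain ⟨x', hx', rfl⟩ := Finset.mem_image.1 hx
  obtain ⟨y', hy', rfl⟩ := Finset.mem_image.1 hy
  obtain ⟨z', hz', hzz⟩ := Finset.mem_image.1 hz
  rw [← hzz] at hne
  rw [Finset.mem_filter] at hx' hy' hz'
  have h1 : z' j = -(x' j + y' j) := congrArg Prod.fst hzz
  have h2 : z' k = -(x' k + y' k) := congrArg Prod.snd hzz
  refine hC x' hx'.1 y' hy'.1 z' hz'.1 ?_ ?_ ?_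
    (hP x' y' z' hx'.2 hy'.2 hz'.2 (by rw [h1]; ring) (by rw [h2]; ring))
  · rintro rfl; exact hxy rfl
  · rintro rfl; exact hne.1 rfl
  · rintro rfl; exact hne.2 rfl

/-- The linear functional with coefficient vector `a`. -/
def dotf (a x : Fin 3 → ZMod 3) : ZMod 3 := a 0 * x 0 + a 1 * x 1 + a 2 * x 2

theorem plane_le (C : Finset (Fin 3 → ZMod 3)) (hC : IsCap C) (a : Fin 3 → ZMod 3) (ha : a ≠ 0)
    (c : ZMod 3) : (C.filter (fun x => dotf a x = c)).card ≤ 4 := by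
  have three : ∀ u : ZMod 3, u + u + u = 0 := by decide
  have key : ∀ x y z, dotf a x = c → dotf a y = c → dotf a z = c →
      a 0 * (x 0 + y 0 + z 0) + a 1 * (x 1 + y 1 + z 1) + a 2 * (x 2 + y 2 + z 2) = 0 := by
    intro x y z hx hy hz
    rw [← three c]
    nth_rw 1 [← hx]
    rw [← hy]
    nth_rw 2 [hy]
    nth_rw 1 [← hz]
    simp only [dotf]
    have := hy.trans hz.symm
    simp only [dotf] at this
    linear_combination (0 : ZMod 3) * this
  have h : a 0 ≠ 0 ∨ a 1 ≠ 0 ∨ a 2 ≠ 0 := by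
    by_contra! h
    apply ha
    funext i
    fin_cases i
    exacts [h.1, h.2.1, h.2.2]
  rcases h with h | h | h
  · apply plane_aux2 C hC _ 1 2
    intro x y z hx hy hz h1 h2
    have := key x y z hx hy hz
    rw [h1, h2] at this
    funext i
    fin_cases i <;> simp_all
  · apply plane_aux2 C hC _ 0 2
    intro x y z hx hy hz h1 h2
    have := key x y z hx hy hz
    rw [h1, h2] at this
    funext i
    fin_cases i <;> simp_all
  · apply plane_aux2 C hC _ 0 1
    intro x y z hx hy hz h1 h2
    have := key x y z hx hy hz
    rw [h1, h2] at this
    funext i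
    fin_cases i <;> simp_all

set_option maxHeartbeats 1000000 in
set_option synthInstance.maxHeartbeats 400000 in
set_option synthInstance.maxSize 4000 in
/-- No plane meets a 9-cap in exactly two points. -/
theorem no_two (C : Finset (Fin 3 → ZMod 3)) (hC : IsCap C) (h9 : C.card = 9)
    (i : Fin 3) (c : ZMod 3) : (C.filter (fun x => x i = c)).card ≠ 2 := by
  intro h2
  obtain ⟨p, q, hpq, hH⟩ := Finset.card_eq_two.1 h2
  have hp : p ∈ C.filter (fun x => x i = c) := by simp [hH]
  have hq : q ∈ C.filter (fun x => x i = c) := by simp [hH]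
  rw [Finset.mem_filter] at hp hq
  have ex : ∀ i : Fin 3, ∀ d : Fin 3 → ZMod 3, d i = 0 →
      ∃ b : Fin 3 → ZMod 3, dotf b d = 0 ∧ b ≠ 0 ∧ Pi.single i 1 + b ≠ 0 ∧
        Pi.single i 1 - b ≠ 0 := by
    unfold dotf
    decide +kernel
  have hs : ∀ i (x : Fin 3 → ZMod 3), dotf (Pi.single i 1) x = x i := by
    intro i x
    fin_cases i <;> simp [dotf]
  have hadd : ∀ a b x, dotf (a + b) x = dotf a x + dotf b x := by
    intro a b x; simp only [dotf, Pi.add_apply]; ring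
  have hsub : ∀ a b x, dotf (a - b) x = dotf a x - dotf b x := by
    intro a b x; simp only [dotf, Pi.sub_apply]; ring
  have hsub' : ∀ a x y, dotf a (x - y) = dotf a x - dotf a y := by
    intro a x y; simp only [dotf, Pi.sub_apply]; ring
  obtain ⟨b, hbd, hb0, hb1, hb2⟩ := ex i (q - p) (by simp [hp.2, hq.2])
  rw [hsub', sub_eq_zero] at hbd
  have bound : ∀ a : Fin 3 → ZMod 3, a ≠ 0 → dotf a q = dotf a p →
      ((C.filter (fun x => dotf a x = dotf a p)) \ {p, q}).card ≤ 2 := by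
    intro a ha hqp
    have h4 := plane_le C hC a ha (dotf a p)
    have hsubs : ({p, q} : Finset _) ⊆ C.filter (fun x => dotf a x = dotf a p) := by
      intro x hx
      simp only [Finset.mem_insert, Finset.mem_singleton] at hx
      rcases hx with rfl | rfl
      · simp [hp.1]
      · simp [hq.1, hqp]
    rw [Finset.card_sdiff_of_subset hsubs, Finset.card_pair hpq]
    omega
  have B1 := bound b hb0 hbd
  have B2 := bound _ hb1 (by rw [hadd, hadd, hs, hs, hbd, hp.2, hq.2])
  have B3 := bound _ hb2 (by rw [hsub, hsub, hs, hs, hbd, hp.2, hq.2])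
  have cover : ∀ α β γ δ : ZMod 3, α = γ ∨ β = δ ∨ α + β = γ + δ ∨ α - β = γ - δ := by decide
  have hcov : C ⊆ {p, q} ∪ ((C.filter (fun x => dotf b x = dotf b p)) \ {p, q}) ∪
      ((C.filter (fun x => dotf (Pi.single i 1 + b) x = dotf (Pi.single i 1 + b) p)) \ {p, q}) ∪
      ((C.filter (fun x => dotf (Pi.single i 1 - b) x = dotf (Pi.single i 1 - b) p)) \ {p, q}) := by
    intro x hx
    by_cases hxpq : x ∈ ({p, q} : Finset _)
    · simp only [Finset.mem_union, hxpq, true_or]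
    · have hxi : x i ≠ p i := by
        intro h
        apply hxpq
        rw [← hH, Finset.mem_filter]
        exact ⟨hx, h.trans hp.2⟩
      simp only [Finset.mem_union, Finset.mem_sdiff, Finset.mem_filter, hxpq, hx, hadd, hsub, hs,
        not_false_eq_true, and_true, true_and, false_or]
      rcases cover (x i) (dotf b x) (p i) (dotf b p) with h | h | h | h
      · exact absurd h hxi
      · exact Or.inl (Or.inl h)
      · exact Or.inl (Or.inr h)
      · exact Or.inr h
  have := Finset.card_le_card hcov
  have u1 := (this.trans (Finset.card_union_le _ _)).trans (Nat.add_le_add (Finset.card_union_le _ _) le_rfl)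
  have u2 := u1.trans (Nat.add_le_add (Nat.add_le_add (Finset.card_union_le _ _) le_rfl) le_rfl)
  rw [Finset.card_pair hpq] at u2
  omega

theorem nine_sum (C : Finset (Fin 3 → ZMod 3)) (hC : IsCap C) (h9 : C.card = 9) :
    ∑ x ∈ C, x = 0 := by
  funext i
  rw [Finset.sum_apply, Pi.zero_apply]
  have hb : ∀ c, (C.filter (fun x => x i = c)).card ≤ 4 := by
    intro c
    have h := plane_le C hC (Pi.single i 1) (by simp) c
    have hs : ∀ x : Fin 3 → ZMod 3, dotf (Pi.single i 1) x = x i := by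
      intro x
      fin_cases i <;> simp [dotf]
    simpa only [hs] using h
  have h2 := no_two C hC h9 i
  have hsum : C.card = ∑ c : ZMod 3, (C.filter (fun x => x i = c)).card :=
    Finset.card_eq_sum_card_fiberwise (fun _ _ => Finset.mem_univ _)
  have hs : ∑ x ∈ C, x i = ∑ c : ZMod 3, ((C.filter (fun x => x i = c)).card : ZMod 3) * c := by
    rw [← Finset.sum_fiberwise C (fun x => x i) (fun x => x i)]
    refine Finset.sum_congr rfl fun c _ => ?_
    rw [Finset.sum_congr rfl (g := fun _ => c) (fun x hx => (Finset.mem_filter.1 hx).2)]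
    simp
  rw [hs]
  have e : ∀ f : ZMod 3 → ℕ, ∑ c : ZMod 3, f c = f 0 + f 1 + f 2 := fun f => Fin.sum_univ_three f
  have e' : ∀ f : ZMod 3 → ZMod 3, ∑ c : ZMod 3, f c = f 0 + f 1 + f 2 :=
    fun f => Fin.sum_univ_three f
  rw [h9, e] at hsum
  rw [e']
  have b0 := hb 0
  have b1 := hb 1
  have b2 := hb 2
  have n0 := h2 0
  have n1 := h2 1
  have n2 := h2 2
  generalize (C.filter (fun x => x i = 0)).card = m0 at *
  generalize (C.filter (fun x => x i = 1)).card = m1 at *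
  generalize (C.filter (fun x => x i = 2)).card = m2 at *
  clear hs h2 hb e e'
  have : (m0 = 3 ∧ m1 = 3 ∧ m2 = 3) ∨ (m0 = 1 ∧ m1 = 4 ∧ m2 = 4) ∨ (m0 = 4 ∧ m1 = 1 ∧ m2 = 4) ∨
      (m0 = 4 ∧ m1 = 4 ∧ m2 = 1) := by omega
  rcases this with ⟨rfl, rfl, rfl⟩ | ⟨rfl, rfl, rfl⟩ | ⟨rfl, rfl, rfl⟩ | ⟨rfl, rfl, rfl⟩ <;> decide

theorem IsCap.mono' {C D : Finset (Fin 3 → ZMod 3)} (hC : IsCap C) (h : D ⊆ C) : IsCap D :=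
  fun x hx y hy z hz => hC x (h hx) y (h hy) z (h hz)

/-- A 9-cap: the paraboloid `z = x² + y²`. -/
def capNine : Finset (Fin 3 → ZMod 3) :=
  Finset.univ.image (fun p : ZMod 3 × ZMod 3 => ![p.1, p.2, p.1 ^ 2 + p.2 ^ 2])

theorem capNine_isCap : IsCap capNine := by
  unfold IsCap capNine
  decide +kernel

theorem capNine_card : capNine.card = 9 := by
  decide +kernel

/-- The points of a maximal cap in `AG(3,3)` sum to the zero vector mod 3. -/
theorem maximal_cap_AG33_sum_zero
    (C : Finset (Fin 3 → ZMod 3)) (hC : MaximalCap C) :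
    ∑ x ∈ C, x = 0 := by
  obtain ⟨hcap, hmax⟩ := hC
  have h9 := hmax _ capNine_isCap
  rw [capNine_card] at h9
  rcases h9.eq_or_lt with h | h
  · exact nine_sum C hcap h.symm
  · exfalso
    obtain ⟨D, hDC, hD⟩ := Finset.exists_subset_card_eq (show 10 ≤ C.card from h)
    have hDcap := hcap.mono' hDC
    have hall : ∀ x ∈ D, x = ∑ y ∈ D, y := by
      intro x hx
      have := nine_sum (D.erase x) (hDcap.mono' (Finset.erase_subset _ _))
        (by rw [Finset.card_erase_of_mem hx, hD])
      rw [← Finset.add_sum_erase D (fun y => y) hx, this, add_zero]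
    have : D.card ≤ 1 := Finset.card_le_one.2 fun a ha b hb => (hall a ha).trans (hall b hb).symm
    omega
end

section
/- AG(3,3) can be partitioned into three pairwise disjoint maximal caps; moreover, for every maximal cap C in AG(3,3) there is exactly one unordered pair {D, E} of maximal caps such that C, D, E are pairwise disjoint and C ∪ D ∪ E is all of AG(3,3). (Every maximal cap of AG(3,3) lies in a unique such partition.) -/
/-- Integers code points by their base 3 digits. -/
def ptc (n : ℕ) : Fin 3 → ZMod 3 := ![(n : ZMod 3), ((n / 3 : ℕ) : ZMod 3), ((n / 9 : ℕ) : ZMod 3)]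

def badc (a b c : ℕ) : Bool :=
  !(a % 27 == b % 27) && ((a + b + c) % 3 == 0) && ((a / 3 + b / 3 + c / 3) % 3 == 0) &&
    ((a / 9 + b / 9 + c / 9) % 3 == 0)

def findc : ℕ → List ℕ → List ℕ → List (List ℕ)
  | 0, _, inn => [inn]
  | _ + 1, [], inn => if 9 ≤ inn.length then [inn] else []
  | k + 1, p :: ps, inn =>
    if inn.length + (p :: ps).length < 9 then [] else
      findc k ps inn ++
      (let qs := ps.filter (fun q => inn.all (fun a => !(badc a p q)))
       findc k qs (p :: inn))

def capc (l : List ℕ) : Bool :=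
  l.all fun a => l.all fun b => l.all fun c => !(badc a b c)

def restc (l : List ℕ) : List ℕ :=
  (List.range 27).filter (fun a => l.all fun b => !(a % 27 == b % 27))

def setc (l : List ℕ) : Finset (Fin 3 → ZMod 3) := (l.map ptc).toFinset

def candc (l : List ℕ) : List (List ℕ) :=
  match restc l with
  | [] => []
  | p :: ps => (findc 20 ps [p]).filter (fun d => capc (restc (l ++ d)))

def frames : List (List ℕ) :=
  findc 18 [4, 5, 7, 10, 11, 12, 13, 14, 15, 16, 17, 19, 21, 22, 23, 25, 26] [9, 3, 1, 0]

def checkc (l : List ℕ) : Bool :=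
  l.length == 9 && (restc l).length == 18 && match candc l with
   | [d] => capc d && d.length == 9 && (restc d).length == 18 && (d.all fun a => (restc l).contains a)
      && capc (restc (l ++ d))
   | _ => false

theorem frames_ok : frames.all checkc = true := by decide +kernel

theorem ptc_eq_iff (a b : ℕ) : ptc a = ptc b ↔ a % 27 = b % 27 := by
  have h : ptc a = ptc b ↔ ((a : ZMod 3) = b ∧ ((a / 3 : ℕ) : ZMod 3) = ((b / 3 : ℕ) : ZMod 3) ∧
      ((a / 9 : ℕ) : ZMod 3) = ((b / 9 : ℕ) : ZMod 3)) := by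
    simp [ptc]
  rw [h, ZMod.natCast_eq_natCast_iff', ZMod.natCast_eq_natCast_iff', ZMod.natCast_eq_natCast_iff']
  omega

theorem badc_iff (a b c : ℕ) : badc a b c = true ↔ ptc a ≠ ptc b ∧ ptc a + ptc b + ptc c = 0 := by
  have h : ptc a + ptc b + ptc c = 0 ↔ (((a + b + c : ℕ) : ZMod 3) = 0 ∧
      ((a / 3 + b / 3 + c / 3 : ℕ) : ZMod 3) = 0 ∧ ((a / 9 + b / 9 + c / 9 : ℕ) : ZMod 3) = 0) := by
    rw [funext_iff, Fin.forall_fin_succ, Fin.forall_fin_succ, Fin.forall_fin_succ]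
    simp [ptc]
  rw [h, ZMod.natCast_eq_zero_iff, ZMod.natCast_eq_zero_iff, ZMod.natCast_eq_zero_iff, Ne, ptc_eq_iff]
  simp only [badc, Bool.and_eq_true, Bool.not_eq_true', beq_eq_false_iff_ne, beq_iff_eq,
    Nat.dvd_iff_mod_eq_zero]
  tauto

theorem third_ne {x y z : Fin 3 → ZMod 3} (hxy : x ≠ y) (h : x + y + z = 0) : x ≠ z ∧ y ≠ z := by
  have h3 : ∀ u v : ZMod 3, u + v + u = 0 → u = v := by decide
  have h4 : ∀ u v : ZMod 3, u + v + v = 0 → u = v := by decide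
  constructor
  · rintro rfl
    exact hxy (funext fun i => h3 _ _ (congrFun h i))
  · rintro rfl
    exact hxy (funext fun i => h4 _ _ (congrFun h i))

theorem isCap_iff (S : Finset (Fin 3 → ZMod 3)) :
    IsCap S ↔ ∀ x ∈ S, ∀ y ∈ S, ∀ z ∈ S, ¬ (x ≠ y ∧ x + y + z = 0) := by
  constructor
  · rintro h x hx y hy z hz ⟨h1, h2⟩
    exact h x hx y hy z hz h1 (third_ne h1 h2).1 (third_ne h1 h2).2 h2
  · intro h x hx y hy z hz h1 _ _ h2
    exact h x hx y hy z hz ⟨h1, h2⟩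

theorem mem_setc {l : List ℕ} {x : Fin 3 → ZMod 3} : x ∈ setc l ↔ ∃ a ∈ l, ptc a = x := by
  simp [setc]

theorem card_setc_le (l : List ℕ) : (setc l).card ≤ l.length := by
  simpa [setc] using List.toFinset_card_le (l.map ptc)

theorem capc_iff (l : List ℕ) : capc l = true ↔ IsCap (setc l) := by
  rw [isCap_iff]
  simp only [capc, List.all_eq_true, Bool.not_eq_true', Bool.eq_false_iff, Ne, badc_iff, mem_setc]
  constructor
  · rintro h _ ⟨a, ha, rfl⟩ _ ⟨b, hb, rfl⟩ _ ⟨c, hc, rfl⟩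
    exact h a ha b hb c hc
  · intro h a ha b hb c hc
    exact h _ ⟨a, ha, rfl⟩ _ ⟨b, hb, rfl⟩ _ ⟨c, hc, rfl⟩

theorem ptc_surj : ∀ x : Fin 3 → ZMod 3, ∃ a ∈ List.range 27, ptc a = x := by decide +kernel

theorem setc_restc (l : List ℕ) : setc (restc l) = (setc l)ᶜ := by
  ext x
  obtain ⟨a, ha, rfl⟩ := ptc_surj x
  simp only [mem_setc, restc, List.mem_filter, List.all_eq_true, Bool.not_eq_true',
    beq_eq_false_iff_ne, Finset.mem_compl, ← ptc_eq_iff, Ne]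
  constructor
  · rintro ⟨b, ⟨_, hb⟩, h⟩ ⟨c, hc, h'⟩
    exact hb c hc (h.trans h'.symm)
  · intro h
    exact ⟨a, ⟨ha, fun b hb e => h ⟨b, hb, e.symm⟩⟩, rfl⟩

theorem setc_append (l m : List ℕ) : setc (l ++ m) = setc l ∪ setc m := by
  simp [setc]

theorem findc_spec (S : Finset (Fin 3 → ZMod 3)) (hS : IsCap S) (hc : 9 ≤ S.card) :
    ∀ (k : ℕ) (rem inn : List ℕ), rem.length < k → setc inn ⊆ S → S ⊆ setc (inn ++ rem) →
      ∃ l ∈ findc k rem inn, S = setc l := by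
  intro k
  induction k with
  | zero => intro rem inn h; omega
  | succ k ih =>
    intro rem inn hk h1 h2
    have hlen : 9 ≤ inn.length + rem.length := by
      have := (Finset.card_le_card h2).trans (card_setc_le _)
      rw [List.length_append] at this
      omega
    cases rem with
    | nil =>
      have : 9 ≤ inn.length := by simpa using hlen
      rw [List.append_nil] at h2
      refine ⟨inn, ?_, h2.antisymm h1⟩
      simp [findc, this]
    | cons p ps =>
      have hk' : ps.length < k := by simpa using hk
      rw [findc, if_neg (by omega)]
      by_cases hp : ptc p ∈ S
      · refine Exists.elim (ih (ps.filter (fun q => inn.all (fun a => !(badc a p q)))) (p :: inn)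
          ((List.length_filter_le _ _).trans_lt hk') ?_ ?_) ?_
        rotate_right
        · rintro l ⟨hl, e⟩
          exact ⟨l, List.mem_append_right _ hl, e⟩
        · intro x hx
          obtain ⟨a, ha, rfl⟩ := mem_setc.1 hx
          rcases List.mem_cons.1 ha with rfl | ha
          · exact hp
          · exact h1 (mem_setc.2 ⟨a, ha, rfl⟩)
        · intro x hx
          obtain ⟨a, ha, rfl⟩ := mem_setc.1 (h2 hx)
          refine mem_setc.2 ⟨a, ?_, rfl⟩
          simp only [List.mem_append, List.mem_cons, List.mem_filter, List.all_eq_true,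
            Bool.not_eq_true', Bool.eq_false_iff, Ne, badc_iff] at ha ⊢
          rcases ha with ha | rfl | ha
          · exact Or.inl (Or.inr ha)
          · exact Or.inl (Or.inl rfl)
          · exact Or.inr ⟨ha, fun b hb => (isCap_iff S).1 hS _ (h1 (mem_setc.2 ⟨b, hb, rfl⟩)) _ hp _ hx⟩
      · refine Exists.elim (ih ps inn hk' h1 ?_) ?_
        rotate_right
        · rintro l ⟨hl, e⟩
          exact ⟨l, List.mem_append_left _ hl, e⟩
        · intro x hx
          obtain ⟨a, ha, rfl⟩ := mem_setc.1 (h2 hx)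
          refine mem_setc.2 ⟨a, ?_, rfl⟩
          simp only [List.mem_append, List.mem_cons] at ha ⊢
          rcases ha with ha | rfl | ha
          · exact Or.inl ha
          · exact absurd hx hp
          · exact Or.inr ha

/-- `D` and the complement of `C ∪ D` complete `C` to a partition into caps. -/
def Compl9 (C D : Finset (Fin 3 → ZMod 3)) : Prop :=
  IsCap D ∧ D.card = 9 ∧ Disjoint C D ∧ IsCap (C ∪ D)ᶜ

def GoodCap (C : Finset (Fin 3 → ZMod 3)) : Prop :=
  C.card = 9 ∧ ∃ D, Compl9 C D ∧ ∀ D', Compl9 C D' → D' = D ∨ D' = (C ∪ D)ᶜ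

theorem card_third {C D : Finset (Fin 3 → ZMod 3)} (hC : C.card = 9) (hD : D.card = 9)
    (h : Disjoint C D) : ((C ∪ D)ᶜ).card = 9 := by
  rw [Finset.card_compl, Finset.card_union_of_disjoint h, hC, hD]
  simp [ZMod.card]

theorem compl9_swap {C D : Finset (Fin 3 → ZMod 3)} (hC : C.card = 9) (h : Compl9 C D) :
    (C ∪ (C ∪ D)ᶜ)ᶜ = D ∧ Compl9 C (C ∪ D)ᶜ := by
  obtain ⟨h1, h2, h3, h4⟩ := h
  have e : (C ∪ (C ∪ D)ᶜ)ᶜ = D := by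
    ext x
    have := fun h : x ∈ _ => Finset.disjoint_left.1 h3 h
    simp only [Finset.mem_compl, Finset.mem_union]
    tauto
  refine ⟨e, h4, card_third hC h2 h3, ?_, by rw [e]; exact h1⟩
  rw [Finset.disjoint_left]
  intro x hx
  simp [hx]

theorem good_of_check (l : List ℕ) (h : checkc l = true) (h9 : 9 ≤ (setc l).card) :
    GoodCap (setc l) := by
  unfold checkc at h
  rw [Bool.and_eq_true, Bool.and_eq_true, beq_iff_eq, beq_iff_eq] at h
  obtain ⟨⟨hl, g6⟩, h⟩ := h
  have hC : (setc l).card = 9 := le_antisymm (hl ▸ card_setc_le l) h9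
  refine ⟨hC, ?_⟩
  split at h
  case h_2 => simp at h
  case h_1 d hd =>
  simp only [Bool.and_eq_true, beq_iff_eq, List.all_eq_true, List.contains_iff_mem] at h
  obtain ⟨⟨⟨⟨g1, g2⟩, g3⟩, g4⟩, g5⟩ := h
  have hD : (setc d).card = 9 := by
    have a1 := card_setc_le d
    have a2 := card_setc_le (restc d)
    rw [setc_restc, Finset.card_compl] at a2
    simp [ZMod.card] at a2
    omega
  have hE : ∀ D, Compl9 (setc l) D → ∀ p ps, restc l = p :: ps → ptc p ∈ D → D = setc d := by
    rintro D ⟨h1, h2, h3, h4⟩ p ps hp hpD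
    refine Exists.elim (findc_spec D h1 h2.ge 20 ps [p] ?_ ?_ ?_) ?_
    rotate_right
    · rintro m ⟨hm, rfl⟩
      have : m ∈ candc l := by
        unfold candc
        rw [hp]
        refine List.mem_filter.2 ⟨hm, ?_⟩
        rw [capc_iff, setc_restc, setc_append]
        exact h4
      rw [hd, List.mem_singleton] at this
      rw [this]
    · have := congrArg List.length hp
      rw [g6, List.length_cons] at this
      omega
    · intro x hx
      obtain ⟨a, ha, rfl⟩ := mem_setc.1 hx
      rw [List.mem_singleton] at ha
      rwa [ha]
    · rw [List.singleton_append, ← hp, setc_restc]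
      exact fun x hx => Finset.mem_compl.2 (Finset.disjoint_right.1 h3 hx)
  have key : Compl9 (setc l) (setc d) := by
    refine ⟨(capc_iff _).1 g1, hD, ?_, ?_⟩
    · rw [Finset.disjoint_right]
      intro x hx
      obtain ⟨a, ha, rfl⟩ := mem_setc.1 hx
      have := mem_setc.2 ⟨a, g4 a ha, rfl⟩
      rwa [setc_restc, Finset.mem_compl] at this
    · rw [← setc_append, ← setc_restc]
      exact (capc_iff _).1 g5
  refine ⟨setc d, key, fun D' hD' => ?_⟩
  rcases hr : restc l with _ | ⟨p, ps⟩
  · simp [candc, hr] at hd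
  · by_cases hp : ptc p ∈ D'
    · exact Or.inl (hE D' hD' p ps hr hp)
    · right
      obtain ⟨e, hs⟩ := compl9_swap hC hD'
      have hpl : ptc p ∉ setc l := by
        rw [← Finset.mem_compl, ← setc_restc, hr]
        exact mem_setc.2 ⟨p, by simp, rfl⟩
      rw [← hE _ hs p ps hr (by simp [hp, hpl]), e]

theorem good_of_frame (S : Finset (Fin 3 → ZMod 3)) (hS : IsCap S) (hc : 9 ≤ S.card)
    (h0 : (0 : Fin 3 → ZMod 3) ∈ S) (h1 : ∀ i, (Pi.single i 1 : Fin 3 → ZMod 3) ∈ S) :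
    GoodCap S := by
  have e0 : ptc 0 ∈ S := by convert h0 using 1; decide
  have e1 : ptc 1 ∈ S := by convert h1 0 using 1; decide
  have e2 : ptc 3 ∈ S := by convert h1 1 using 1; decide
  have e3 : ptc 9 ∈ S := by convert h1 2 using 1; decide
  have hne : ∀ a b c, ptc a ∈ S → ptc b ∈ S → badc a b c = true → ptc c ∉ S := by
    intro a b c ha hb hbad hcS
    exact (isCap_iff S).1 hS _ ha _ hb _ hcS ((badc_iff _ _ _).1 hbad)
  refine Exists.elim (findc_spec S hS hc 18
    [4, 5, 7, 10, 11, 12, 13, 14, 15, 16, 17, 19, 21, 22, 23, 25, 26] [9, 3, 1, 0] (by decide) ?_ ?_) ?_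
  rotate_right
  · rintro l ⟨hl, rfl⟩
    exact good_of_check l (List.all_eq_true.1 frames_ok l hl) hc
  · intro x hx
    obtain ⟨a, ha, rfl⟩ := mem_setc.1 hx
    simp only [List.mem_cons, List.not_mem_nil, or_false] at ha
    rcases ha with rfl | rfl | rfl | rfl <;> assumption
  · intro x hx
    obtain ⟨a, ha, rfl⟩ := ptc_surj x
    refine mem_setc.2 ⟨a, ?_, rfl⟩
    have b1 := hne 0 1 2 e0 e1 rfl
    have b2 := hne 0 3 6 e0 e2 rfl
    have b3 := hne 0 9 18 e0 e3 rfl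
    have b4 := hne 1 3 8 e1 e2 rfl
    have b5 := hne 1 9 20 e1 e3 rfl
    have b6 := hne 3 9 24 e2 e3 rfl
    have : a ≠ 2 ∧ a ≠ 6 ∧ a ≠ 18 ∧ a ≠ 8 ∧ a ≠ 20 ∧ a ≠ 24 := by
      refine ⟨?_, ?_, ?_, ?_, ?_, ?_⟩ <;> rintro rfl <;> contradiction
    rw [List.mem_range] at ha
    simp only [List.mem_append, List.mem_cons, List.not_mem_nil, or_false]
    omega

theorem three_zero : ∀ x : Fin 3 → ZMod 3, x + x + x = 0 := by decide +kernel

theorem exists_frame (S : Finset (Fin 3 → ZMod 3)) (hS : IsCap S) (hc : 9 ≤ S.card) :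
    ∃ f : (Fin 3 → ZMod 3) ≃ (Fin 3 → ZMod 3),
      (∀ x y z, f x + f y + f z = 0 ↔ x + y + z = 0) ∧
      (0 : Fin 3 → ZMod 3) ∈ S.map f.toEmbedding ∧
      ∀ i, (Pi.single i 1 : Fin 3 → ZMod 3) ∈ S.map f.toEmbedding := by
  classical
  have : Fact (Nat.Prime 3) := ⟨Nat.prime_three⟩
  obtain ⟨x0, hx0⟩ : S.Nonempty := Finset.card_pos.1 (by omega)
  let T : Set (Fin 3 → ZMod 3) := (fun x => x - x0) '' S
  have h3 := three_zero
  have hT : Submodule.span (ZMod 3) T = ⊤ := by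
    by_contra hne
    set W := Submodule.span (ZMod 3) T with hW
    have hfr : Module.finrank (ZMod 3) W < 3 := by
      have := Submodule.finrank_lt (lt_top_iff_ne_top.2 hne).ne
      simpa using this
    have hcard : Nat.card W ≤ 9 := by
      rw [Module.natCard_eq_pow_finrank (K := ZMod 3), Nat.card_zmod]
      calc 3 ^ _ ≤ 3 ^ 2 := Nat.pow_le_pow_right (by norm_num) (by omega)
        _ = 9 := by norm_num
    have hTc : T.ncard = S.card := by
      rw [Set.ncard_image_of_injective _ (sub_left_injective), Set.ncard_coe_finset]
    have hTW : T = (W : Set (Fin 3 → ZMod 3)) := by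
      refine Set.eq_of_subset_of_ncard_le Submodule.subset_span ?_ (Set.toFinite _)
      rw [hTc]
      exact le_trans hcard hc
    obtain ⟨y, hy, hyx⟩ := Finset.exists_mem_ne (by omega : 1 < S.card) x0
    have hyW : y - x0 ∈ W := by
      rw [← SetLike.mem_coe, ← hTW]
      exact ⟨y, hy, rfl⟩
    have hz : -(y - x0) ∈ T := by
      rw [hTW]
      exact W.neg_mem hyW
    obtain ⟨z, hz, hze⟩ := hz
    refine (isCap_iff S).1 hS y hy x0 hx0 z hz ⟨hyx, ?_⟩
    have hz' : z = x0 + x0 - y := by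
      have hze' : z - x0 = -(y - x0) := hze
      rw [sub_eq_iff_eq_add] at hze'
      rw [hze']; abel
    rw [hz', ← h3 x0]; abel
  obtain ⟨B, hBT, hBs, hBi⟩ := exists_linearIndependent (ZMod 3) T
  rw [hT] at hBs
  let b := Module.Basis.mk hBi (by rw [Subtype.range_coe]; exact hBs.ge)
  have hBc : Fintype.card B = 3 := by
    rw [← Module.finrank_eq_card_basis b]; simp
  let b' := b.reindex (Fintype.equivFinOfCardEq hBc)
  have hb' : ∀ i, b' i ∈ T := by
    intro i
    apply hBT
    simp [b', b]
  let e := b'.equivFun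
  refine ⟨(Equiv.subRight x0).trans e.toEquiv, ?_, ?_, ?_⟩
  · intro x y z
    have : e (x - x0) + e (y - x0) + e (z - x0) = e (x + y + z) := by
      rw [← map_add, ← map_add]
      congr 1
      have : x - x0 + (y - x0) + (z - x0) = x + y + z - (x0 + x0 + x0) := by abel
      rw [this, h3, sub_zero]
    change e (x - x0) + e (y - x0) + e (z - x0) = 0 ↔ _
    rw [this, map_eq_zero_iff _ e.injective]
  · refine Finset.mem_map.2 ⟨x0, hx0, ?_⟩
    change e (x0 - x0) = 0
    simp
  · intro i
    obtain ⟨y, hy, hyi⟩ := hb' i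
    refine Finset.mem_map.2 ⟨y, hy, ?_⟩
    change e (y - x0) = _
    have hyi' : y - x0 = b' i := hyi
    rw [hyi']
    simp [e]
    try (ext j; simp [Finsupp.single_apply, Pi.single_apply, eq_comm])

theorem isCap_map (f : (Fin 3 → ZMod 3) ≃ (Fin 3 → ZMod 3))
    (hf : ∀ x y z, f x + f y + f z = 0 ↔ x + y + z = 0) (S : Finset (Fin 3 → ZMod 3)) :
    IsCap (S.map f.toEmbedding) ↔ IsCap S := by
  simp only [isCap_iff, Finset.forall_mem_map, Equiv.coe_toEmbedding, hf, f.injective.ne_iff]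

theorem map_third (f : (Fin 3 → ZMod 3) ≃ (Fin 3 → ZMod 3)) (C D : Finset (Fin 3 → ZMod 3)) :
    (C.map f.toEmbedding ∪ D.map f.toEmbedding)ᶜ = ((C ∪ D)ᶜ).map f.toEmbedding := by
  ext x
  obtain ⟨y, rfl⟩ := f.surjective x
  simp

theorem compl9_map (f : (Fin 3 → ZMod 3) ≃ (Fin 3 → ZMod 3))
    (hf : ∀ x y z, f x + f y + f z = 0 ↔ x + y + z = 0) (C D : Finset (Fin 3 → ZMod 3)) :
    Compl9 (C.map f.toEmbedding) (D.map f.toEmbedding) ↔ Compl9 C D := by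
  unfold Compl9
  rw [map_third, isCap_map f hf, isCap_map f hf, Finset.card_map, Finset.disjoint_map]

theorem good_of_cap (S : Finset (Fin 3 → ZMod 3)) (hS : IsCap S) (hc : 9 ≤ S.card) :
    GoodCap S := by
  obtain ⟨f, hf, h0, h1⟩ := exists_frame S hS hc
  obtain ⟨g1, D, g2, g3⟩ := good_of_frame _ ((isCap_map f hf S).2 hS) (by rwa [Finset.card_map]) h0 h1
  rw [Finset.card_map] at g1
  obtain ⟨D, rfl⟩ : ∃ D₀ : Finset (Fin 3 → ZMod 3), D₀.map f.toEmbedding = D := by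
    refine ⟨D.map f.symm.toEmbedding, ?_⟩
    ext x; simp
  refine ⟨g1, D, (compl9_map f hf _ _).1 g2, fun D' hD' => ?_⟩
  have := g3 _ ((compl9_map f hf _ _).2 hD')
  rwa [map_third, Finset.map_inj, Finset.map_inj] at this

theorem cap_le (S : Finset (Fin 3 → ZMod 3)) (hS : IsCap S) : S.card ≤ 9 := by
  by_contra h
  have := (good_of_cap S hS (by omega)).1
  omega

theorem exists_cap9 : ∃ S : Finset (Fin 3 → ZMod 3), IsCap S ∧ S.card = 9 :=
  ⟨setc [26, 25, 19, 16, 15, 9, 3, 1, 0], (capc_iff _).1 (by decide +kernel), by decide +kernel⟩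

theorem maximalCap_iff (S : Finset (Fin 3 → ZMod 3)) : MaximalCap S ↔ IsCap S ∧ S.card = 9 := by
  constructor
  · rintro ⟨h1, h2⟩
    obtain ⟨A, hA, hA9⟩ := exists_cap9
    exact ⟨h1, le_antisymm (cap_le S h1) (hA9 ▸ h2 A hA)⟩
  · rintro ⟨h1, h2⟩
    exact ⟨h1, fun D hD => h2 ▸ cap_le D hD⟩

theorem part_third (C D : Finset (Fin 3 → ZMod 3)) :
    Disjoint C (C ∪ D)ᶜ ∧ Disjoint D (C ∪ D)ᶜ ∧ C ∪ D ∪ (C ∪ D)ᶜ = Finset.univ := by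
  refine ⟨?_, ?_, Finset.union_compl _⟩
  · exact disjoint_compl_right.mono_left Finset.subset_union_left
  · exact disjoint_compl_right.mono_left Finset.subset_union_right

theorem AG33_partition_into_three_maximal_caps :
    (∃ A B C : Finset (Fin 3 → ZMod 3),
      MaximalCap A ∧ MaximalCap B ∧ MaximalCap C ∧
      Disjoint A B ∧ Disjoint A C ∧ Disjoint B C ∧
      A ∪ B ∪ C = Finset.univ) ∧
    ∀ C : Finset (Fin 3 → ZMod 3), MaximalCap C →
      ∃! P : Finset (Finset (Fin 3 → ZMod 3)),
        P.card = 2 ∧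
        (∀ D ∈ P, MaximalCap D ∧ Disjoint C D) ∧
        (∀ D ∈ P, ∀ E ∈ P, D ≠ E → Disjoint D E) ∧
        C ∪ P.sup id = Finset.univ := by
  constructor
  · obtain ⟨A, hA, hA9⟩ := exists_cap9
    obtain ⟨_, D, ⟨d1, d2, d3, d4⟩, _⟩ := good_of_cap A hA hA9.ge
    obtain ⟨p1, p2, p3⟩ := part_third A D
    exact ⟨A, D, (A ∪ D)ᶜ, (maximalCap_iff _).2 ⟨hA, hA9⟩, (maximalCap_iff _).2 ⟨d1, d2⟩,
      (maximalCap_iff _).2 ⟨d4, card_third hA9 d2 d3⟩, d3, p1, p2, p3⟩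
  · intro C hC
    obtain ⟨hC1, hC9⟩ := (maximalCap_iff C).1 hC
    obtain ⟨_, D, ⟨d1, d2, d3, d4⟩, hu⟩ := good_of_cap C hC1 hC9.ge
    obtain ⟨p1, p2, p3⟩ := part_third C D
    have hE9 := card_third hC9 d2 d3
    have hne : D ≠ (C ∪ D)ᶜ := by
      intro h
      rw [← h, disjoint_self] at p2
      rw [p2] at d2
      simp at d2
    refine ⟨{D, (C ∪ D)ᶜ}, ⟨Finset.card_pair hne, ?_, ?_, ?_⟩, ?_⟩
    · intro X hX
      rw [Finset.mem_insert, Finset.mem_singleton] at hX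
      rcases hX with rfl | rfl
      · exact ⟨(maximalCap_iff _).2 ⟨d1, d2⟩, d3⟩
      · exact ⟨(maximalCap_iff _).2 ⟨d4, hE9⟩, p1⟩
    · intro X hX Y hY hXY
      rw [Finset.mem_insert, Finset.mem_singleton] at hX hY
      rcases hX with hX | hX <;> rcases hY with hY | hY <;> rw [hX, hY] at hXY ⊢
      · exact absurd rfl hXY
      · exact p2
      · exact p2.symm
      · exact absurd rfl hXY
    · rw [Finset.sup_insert, Finset.sup_singleton]
      simp only [id, Finset.sup_eq_union]
      rw [← Finset.union_assoc]
      exact p3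
    · rintro P ⟨q1, q2, q3, q4⟩
      obtain ⟨X, Y, hXY, rfl⟩ := Finset.card_eq_two.1 q1
      obtain ⟨hX, hX'⟩ := q2 X (by simp)
      obtain ⟨hY, hY'⟩ := q2 Y (by simp)
      have hd := q3 X (by simp) Y (by simp) hXY
      rw [Finset.sup_insert, Finset.sup_singleton] at q4
      simp only [id, Finset.sup_eq_union] at q4
      rw [maximalCap_iff] at hX hY
      have hYe : Y = (C ∪ X)ᶜ := by
        ext x
        have a1 : x ∈ C ∪ (X ∪ Y) := q4 ▸ Finset.mem_univ x
        have a2 := fun h : x ∈ _ => Finset.disjoint_left.1 hd h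
        have a3 := fun h : x ∈ _ => Finset.disjoint_left.1 hY' h
        simp only [Finset.mem_union, Finset.mem_compl] at a1 ⊢
        tauto
      have hcX : Compl9 C X := ⟨hX.1, hX.2, hX', hYe ▸ hY.1⟩
      rcases hu X hcX with h | h
      · rw [hYe, h]
      · have := (compl9_swap hC9 ⟨d1, d2, d3, d4⟩).1
        rw [hYe, h, this, Finset.pair_comm]
end

section
/- Let C be a maximal cap in AG(3,3) and let f : (Fin 3 → ZMod 3) → ZMod 3 be any surjective affine map (so the three fibers of f are three parallel planes). Then the multiset of cardinalities {|C ∩ f⁻¹(0)|, |C ∩ f⁻¹(1)|, |C ∩ f⁻¹(2)|} is either {4, 4, 1} or {3, 3, 3}. -/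
namespace CapAux

/-- The elliptic paraboloid. -/
def parab : Finset (Fin 3 → ZMod 3) :=
  Finset.univ.image fun p : ZMod 3 × ZMod 3 => ![p.1, p.2, p.1 ^ 2 + p.2 ^ 2]

theorem parab_card : parab.card = 9 := by decide +kernel

theorem parab_aux : ∀ a b c d e g : ZMod 3, ¬(a = c ∧ b = d) → a + c + e = 0 → b + d + g = 0 →
    (a ^ 2 + b ^ 2) + (c ^ 2 + d ^ 2) + (e ^ 2 + g ^ 2) ≠ 0 := by decide +kernel

theorem parab_cap : IsCap parab := by
  intro x hx y hy z hz hxy _ _ h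
  simp only [parab, Finset.mem_image, Finset.mem_univ, true_and, Prod.exists] at hx hy hz
  obtain ⟨a, b, rfl⟩ := hx
  obtain ⟨c, d, rfl⟩ := hy
  obtain ⟨e, g, rfl⟩ := hz
  have h0 := congrFun h 0
  have h1 := congrFun h 1
  have h2 := congrFun h 2
  simp at h0 h1 h2
  refine parab_aux a b c d e g ?_ h0 h1 h2
  rintro ⟨rfl, rfl⟩
  exact hxy rfl

theorem three_V (x : Fin 3 → ZMod 3) : x + x + x = 0 := by
  funext i
  simp only [Pi.add_apply, Pi.zero_apply]
  generalize x i = a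
  revert a; decide

theorem indep_aux : ∀ s t : ZMod 3, (s, t) ≠ (0, 0) → s = 0 ∨ t = 0 ∨ s = t ∨ s + t = 0 := by
  decide

/-- two independent vectors span the kernel -/
theorem span_ker (φ : (Fin 3 → ZMod 3) →ₗ[ZMod 3] ZMod 3) (hφ : Function.Surjective φ)
    (u v : Fin 3 → ZMod 3) (hu : φ u = 0) (hv : φ v = 0) (hu0 : u ≠ 0) (hv0 : v ≠ 0)
    (huv : u ≠ v) (huv' : u + v ≠ 0) (x : Fin 3 → ZMod 3) (hx : φ x = 0) :
    ∃ α β : ZMod 3, x = α • u + β • v := by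
  have hdim : Module.finrank (ZMod 3) (LinearMap.ker φ) = 2 := by
    have h1 := LinearMap.finrank_range_add_finrank_ker φ
    rw [LinearMap.range_eq_top.mpr hφ] at h1
    simp at h1
    omega
  have hli : LinearIndependent (ZMod 3) ![u, v] := by
    rw [LinearIndependent.pair_iff]
    have key : ∀ s t : ZMod 3, s • u + t • v = 0 → s = 0 ∧ t = 0 := by
      intro s t h
      have cases3 : ∀ a : ZMod 3, a = 0 ∨ a = 1 ∨ a = -1 := by decide
      rcases cases3 s with rfl | rfl | rfl <;> rcases cases3 t with rfl | rfl | rfl <;>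
        simp at h ⊢
      · exact hv0 h
      · exact hv0 h
      · exact hu0 h
      · exact huv' h
      · exact huv (by rw [← sub_eq_zero, sub_eq_add_neg]; exact h)
      · exact hu0 h
      · exact huv (by rw [neg_add_eq_zero] at h; exact h)
      · exact huv' (by rw [← neg_eq_zero, neg_add]; exact h)
    exact key
  have hle : Submodule.span (ZMod 3) (Set.range ![u, v]) ≤ LinearMap.ker φ := by
    rw [Submodule.span_le]
    rintro _ ⟨i, rfl⟩
    fin_cases i
    · exact hu
    · exact hv
  have heq := Submodule.eq_of_le_of_finrank_eq hle (by
    rw [finrank_span_eq_card hli, hdim]; rfl)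
  have hxm : x ∈ Submodule.span (ZMod 3) (Set.range ![u, v]) := by
    rw [heq]; exact hx
  have : Set.range ![u, v] = {u, v} := by simp [Matrix.range_cons, Set.pair_comm]
  rw [this, Submodule.mem_span_pair] at hxm
  obtain ⟨a, b, h⟩ := hxm
  exact ⟨a, b, h.symm⟩

set_option synthInstance.maxHeartbeats 2000000 in
set_option synthInstance.maxSize 4000 in
set_option maxHeartbeats 2000000 in
theorem dec5 : ∀ x y z w : ZMod 3, ¬(x = 0 ∧ y = 0) → ¬(x = 1 ∧ y = 0) → ¬(x = 0 ∧ y = 1) →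
    ¬(z = 0 ∧ w = 0) → ¬(z = 1 ∧ w = 0) → ¬(z = 0 ∧ w = 1) → ¬ (x = z ∧ y = w) →
    (1 + x = 0 ∧ y = 0) ∨ (x = 0 ∧ 1 + y = 0) ∨ (1 + x = 0 ∧ 1 + y = 0) ∨
    (1 + z = 0 ∧ w = 0) ∨ (z = 0 ∧ 1 + w = 0) ∨ (1 + z = 0 ∧ 1 + w = 0) ∨
    (x + z = 0 ∧ y + w = 0) ∨ (1 + x + z = 0 ∧ y + w = 0) ∨ (x + z = 0 ∧ 1 + y + w = 0) := by
  decide +kernel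

/-- the check that a point (x,y) completes a 4-cap -/
def Good (x y : ZMod 3) : Prop :=
  ¬(x = 0 ∧ y = 0) ∧ ¬(x = 1 ∧ y = 0) ∧ ¬(x = 0 ∧ y = 1) ∧
  ¬(1 + x = 0 ∧ y = 0) ∧ ¬(x = 0 ∧ 1 + y = 0) ∧ ¬(1 + x = 0 ∧ 1 + y = 0)

instance (x y : ZMod 3) : Decidable (Good x y) := by
  unfold Good; infer_instance

/-- the point (c,d) of the third plane is compatible with the point (a,b) of the second -/
def Comp (x y a b c d : ZMod 3) : Prop :=
  ¬(a + c = 0 ∧ b + d = 0) ∧ ¬(1 + a + c = 0 ∧ b + d = 0) ∧ ¬(a + c = 0 ∧ 1 + b + d = 0) ∧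
  ¬(x + a + c = 0 ∧ y + b + d = 0)

instance (x y a b c d : ZMod 3) : Decidable (Comp x y a b c d) := by
  unfold Comp; infer_instance

set_option synthInstance.maxHeartbeats 2000000 in
set_option synthInstance.maxSize 4000 in
set_option maxHeartbeats 2000000 in
theorem dec9 : ∀ x y : ZMod 3, Good x y → ∀ c d : ZMod 3, Comp x y 0 0 c d →
    ∀ e g : ZMod 3, Comp x y 0 0 e g → ¬(c = e ∧ d = g) →
    ∀ p q : ZMod 3, ¬ (p = 0 ∧ q = 0) → Comp x y p q c d → Comp x y p q e g →
    ∀ r s : ZMod 3, ¬ (r = 0 ∧ s = 0) → ¬ (p = r ∧ q = s) → ¬ (p + r = 0 ∧ q + s = 0) →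
      Comp x y r s c d → ¬ Comp x y r s e g := by
  decide +kernel

variable {C : Finset (Fin 3 → ZMod 3)} {f : (Fin 3 → ZMod 3) →ᵃ[ZMod 3] ZMod 3}

theorem f_sub (f : (Fin 3 → ZMod 3) →ᵃ[ZMod 3] ZMod 3) (x y : Fin 3 → ZMod 3) :
    f.linear (x - y) = f x - f y := f.linearMap_vsub x y

theorem f_sum (f : (Fin 3 → ZMod 3) →ᵃ[ZMod 3] ZMod 3) (a b c : Fin 3 → ZMod 3) :
    f.linear (c + a + b) = f c + f a + f b := by
  have h : ∀ x, f x = f.linear x + f 0 := fun x => by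
    have := f_sub f x 0
    rw [sub_zero] at this
    rw [this]; ring
  rw [h a, h b, h c, map_add, map_add]
  generalize f 0 = k
  generalize f.linear a = a
  generalize f.linear b = b
  generalize f.linear c = c
  revert a b c k; decide +kernel

/-- coordinates in a plane containing three cap points -/
theorem coords (hC : IsCap C) (hf : Function.Surjective f) {i : ZMod 3}
    {a₁ a₂ a₃ : Fin 3 → ZMod 3} (h₁ : a₁ ∈ C) (h₂ : a₂ ∈ C) (h₃ : a₃ ∈ C)
    (f₁ : f a₁ = i) (f₂ : f a₂ = i) (f₃ : f a₃ = i)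
    (h12 : a₁ ≠ a₂) (h13 : a₁ ≠ a₃) (h23 : a₂ ≠ a₃) (x : Fin 3 → ZMod 3)
    (hx : f.linear x = 0) : ∃ α β : ZMod 3, x = α • (a₂ - a₁) + β • (a₃ - a₁) := by
  refine span_ker f.linear (f.linear_surjective_iff.mpr hf) _ _ ?_ ?_ ?_ ?_ ?_ ?_ x hx
  · rw [f_sub, f₁, f₂, sub_self]
  · rw [f_sub, f₁, f₃, sub_self]
  · exact sub_ne_zero.mpr h12.symm
  · exact sub_ne_zero.mpr h13.symm
  · intro h; exact h23 (sub_left_injective h)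
  · intro h
    apply hC a₁ h₁ a₂ h₂ a₃ h₃ h12 h13 h23
    have := three_V a₁
    calc a₁ + a₂ + a₃ = (a₂ - a₁ + (a₃ - a₁)) + (a₁ + a₁ + a₁) := by abel
      _ = 0 := by rw [h, this, add_zero]

/-- collinearity from coordinates -/
theorem sum_zero (a b c u v : Fin 3 → ZMod 3) (habc : a + b + c = 0) (x₁ y₁ x₂ y₂ x₃ y₃ : ZMod 3)
    (hx : x₁ + x₂ + x₃ = 0) (hy : y₁ + y₂ + y₃ = 0) :
    (a + (x₁ • u + y₁ • v)) + (b + (x₂ • u + y₂ • v)) + (c + (x₃ • u + y₃ • v)) = 0 := by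
  calc _ = (a + b + c) + ((x₁ + x₂ + x₃) • u + (y₁ + y₂ + y₃) • v) := by
        simp only [add_smul]; abel
    _ = 0 := by rw [habc, hx, hy]; simp

theorem exists_coord {a x u v : Fin 3 → ZMod 3}
    (h : ∃ α β : ZMod 3, x - a = α • u + β • v) : ∃ α β : ZMod 3, x = a + (α • u + β • v) := by
  obtain ⟨α, β, h⟩ := h
  exact ⟨α, β, by rw [← h]; abel⟩

theorem plane_le (hC : IsCap C) (hf : Function.Surjective f) (i : ZMod 3) :
    (C.filter fun x => f x = i).card ≤ 4 := by
  by_contra hlt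
  obtain ⟨T, hTs, hT⟩ := Finset.exists_subset_card_eq (show 5 ≤ (C.filter fun x => f x = i).card by omega)
  obtain ⟨e⟩ : Nonempty (Fin 5 ≃ T) := ⟨(Finset.equivFinOfCardEq hT).symm⟩
  have hm : ∀ k, (e k).1 ∈ C ∧ f (e k).1 = i := fun k => by
    simpa using hTs (e k).2
  have hne : ∀ k l, k ≠ l → (e k).1 ≠ (e l).1 := fun k l h h' =>
    h (e.injective (Subtype.ext h'))
  have hs : ∀ k l m, k ≠ l → k ≠ m → l ≠ m → (e k).1 + (e l).1 + (e m).1 ≠ 0 :=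
    fun k l m h1 h2 h3 => hC _ (hm k).1 _ (hm l).1 _ (hm m).1 (hne _ _ h1) (hne _ _ h2) (hne _ _ h3)
  have co := coords hC hf (hm 0).1 (hm 1).1 (hm 2).1 (hm 0).2 (hm 1).2 (hm 2).2
    (hne 0 1 (by decide)) (hne 0 2 (by decide)) (hne 1 2 (by decide))
  have c3 := exists_coord (co ((e 3).1 - (e 0).1) (by rw [f_sub, (hm _).2, (hm _).2, sub_self]))
  have c4 := exists_coord (co ((e 4).1 - (e 0).1) (by rw [f_sub, (hm _).2, (hm _).2, sub_self]))
  have e0 : (e 0).1 = (e 0).1 + ((0 : ZMod 3) • ((e 1).1 - (e 0).1)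
    + (0 : ZMod 3) • ((e 2).1 - (e 0).1)) := by simp
  have e1 : (e 1).1 = (e 0).1 + ((1 : ZMod 3) • ((e 1).1 - (e 0).1)
    + (0 : ZMod 3) • ((e 2).1 - (e 0).1)) := by simp
  have e2 : (e 2).1 = (e 0).1 + ((0 : ZMod 3) • ((e 1).1 - (e 0).1)
    + (1 : ZMod 3) • ((e 2).1 - (e 0).1)) := by simp
  obtain ⟨x, y, e3⟩ := c3
  obtain ⟨z, w, e4⟩ := c4
  generalize (e 1).1 - (e 0).1 = u at *
  generalize (e 2).1 - (e 0).1 = v at *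
  have S := sum_zero (e 0).1 (e 0).1 (e 0).1 u v (three_V _)
  have N : ∀ k l {x y z w : ZMod 3}, k ≠ l → (e k).1 = (e 0).1 + (x • u + y • v) →
      (e l).1 = (e 0).1 + (z • u + w • v) → ¬ (x = z ∧ y = w) := by
    rintro k l x y z w hkl h1 h2 ⟨rfl, rfl⟩
    exact hne k l hkl (h1.trans h2.symm)
  have P : ∀ k l m {x₁ y₁ x₂ y₂ x₃ y₃ : ZMod 3}, k ≠ l ∧ k ≠ m ∧ l ≠ m →
      (e k).1 = (e 0).1 + (x₁ • u + y₁ • v) → (e l).1 = (e 0).1 + (x₂ • u + y₂ • v) →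
      (e m).1 = (e 0).1 + (x₃ • u + y₃ • v) → ¬ (x₁ + x₂ + x₃ = 0 ∧ y₁ + y₂ + y₃ = 0) := by
    rintro k l m x₁ y₁ x₂ y₂ x₃ y₃ ⟨h1, h2, h3⟩ hk hl hm ⟨hx, hy⟩
    have := S _ _ _ _ _ _ hx hy
    rw [← hk, ← hl, ← hm] at this
    exact hs k l m h1 h2 h3 this
  have p013 := P 0 1 3 (by decide) e0 e1 e3
  have p023 := P 0 2 3 (by decide) e0 e2 e3
  have p123 := P 1 2 3 (by decide) e1 e2 e3
  have p014 := P 0 1 4 (by decide) e0 e1 e4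
  have p024 := P 0 2 4 (by decide) e0 e2 e4
  have p124 := P 1 2 4 (by decide) e1 e2 e4
  have p034 := P 0 3 4 (by decide) e0 e3 e4
  have p134 := P 1 3 4 (by decide) e1 e3 e4
  have p234 := P 2 3 4 (by decide) e2 e3 e4
  simp only [zero_add, add_zero] at p013 p023 p123 p014 p024 p124 p034 p134 p234
  have := dec5 x y z w (N 3 0 (by decide) e3 e0) (N 3 1 (by decide) e3 e1) (N 3 2 (by decide) e3 e2)
    (N 4 0 (by decide) e4 e0) (N 4 1 (by decide) e4 e1) (N 4 2 (by decide) e4 e2)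
    (N 3 4 (by decide) e3 e4)
  rcases this with h | h | h | h | h | h | h | h | h
  exacts [p013 h, p023 h, p123 h, p014 h, p024 h, p124 h, p034 h, p134 h, p234 h]

theorem no432 (hC : IsCap C) (hf : Function.Surjective f) (i j k : ZMod 3)
    (hij : i ≠ j) (hik : i ≠ k) (hjk : j ≠ k)
    (hi : 4 ≤ (C.filter fun x => f x = i).card) (hj : 3 ≤ (C.filter fun x => f x = j).card)
    (hk : 2 ≤ (C.filter fun x => f x = k).card) : False := by
  have ijk : ∀ i j k : ZMod 3, i ≠ j → i ≠ k → j ≠ k → k + i + j = 0 := by decide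
  obtain ⟨T, hTs, hT⟩ := Finset.exists_subset_card_eq hi
  obtain ⟨e⟩ : Nonempty (Fin 4 ≃ T) := ⟨(Finset.equivFinOfCardEq hT).symm⟩
  have hm : ∀ k, (e k).1 ∈ C ∧ f (e k).1 = i := fun k => by
    simpa using hTs (e k).2
  have hne : ∀ k l, k ≠ l → (e k).1 ≠ (e l).1 := fun k l h h' =>
    h (e.injective (Subtype.ext h'))
  have hs : ∀ k l m, k ≠ l → k ≠ m → l ≠ m → (e k).1 + (e l).1 + (e m).1 ≠ 0 :=
    fun k l m h1 h2 h3 => hC _ (hm k).1 _ (hm l).1 _ (hm m).1 (hne _ _ h1) (hne _ _ h2) (hne _ _ h3)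
  have co := coords hC hf (hm 0).1 (hm 1).1 (hm 2).1 (hm 0).2 (hm 1).2 (hm 2).2
    (hne 0 1 (by decide)) (hne 0 2 (by decide)) (hne 1 2 (by decide))
  obtain ⟨b₁, b₂, b₃, hb₁, hb₂, hb₃, b12, b13, b23⟩ := Finset.two_lt_card_iff.mp hj
  obtain ⟨c₁, c₂, hc₁, hc₂, c12⟩ := Finset.one_lt_card_iff.mp hk
  simp only [Finset.mem_filter] at hb₁ hb₂ hb₃ hc₁ hc₂
  have c3 := exists_coord (co ((e 3).1 - (e 0).1) (by rw [f_sub, (hm _).2, (hm _).2, sub_self]))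
  obtain ⟨p, q, eb₂⟩ := exists_coord (co (b₂ - b₁) (by rw [f_sub, hb₁.2, hb₂.2, sub_self]))
  obtain ⟨r, s, eb₃⟩ := exists_coord (co (b₃ - b₁) (by rw [f_sub, hb₁.2, hb₃.2, sub_self]))
  have cc : ∀ c, f c = k → ∃ α β : ZMod 3, c = (-(e 0).1 - b₁) +
      (α • ((e 1).1 - (e 0).1) + β • ((e 2).1 - (e 0).1)) := by
    intro c hc
    apply exists_coord
    apply co
    have : c - (-(e 0).1 - b₁) = c + (e 0).1 + b₁ := by abel
    rw [this, f_sum, hc, (hm 0).2, hb₁.2, ijk i j k hij hik hjk]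
  obtain ⟨c, d, ec₁⟩ := cc c₁ hc₁.2
  obtain ⟨t, g, ec₂⟩ := cc c₂ hc₂.2
  have e0 : (e 0).1 = (e 0).1 + ((0 : ZMod 3) • ((e 1).1 - (e 0).1)
    + (0 : ZMod 3) • ((e 2).1 - (e 0).1)) := by simp
  have eb₁ : b₁ = b₁ + ((0 : ZMod 3) • ((e 1).1 - (e 0).1)
    + (0 : ZMod 3) • ((e 2).1 - (e 0).1)) := by simp
  have e1 : (e 1).1 = (e 0).1 + ((1 : ZMod 3) • ((e 1).1 - (e 0).1)
    + (0 : ZMod 3) • ((e 2).1 - (e 0).1)) := by simp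
  have e2 : (e 2).1 = (e 0).1 + ((0 : ZMod 3) • ((e 1).1 - (e 0).1)
    + (1 : ZMod 3) • ((e 2).1 - (e 0).1)) := by simp
  obtain ⟨x, y, e3⟩ := c3
  clear cc co
  generalize (e 1).1 - (e 0).1 = u at *
  generalize (e 2).1 - (e 0).1 = v at *
  have N : ∀ o {a b : Fin 3 → ZMod 3} {x y z w : ZMod 3}, a ≠ b → a = o + (x • u + y • v) →
      b = o + (z • u + w • v) → ¬ (x = z ∧ y = w) := by
    rintro o a b x y z w hkl h1 h2 ⟨rfl, rfl⟩
    exact hkl (h1.trans h2.symm)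
  have P : ∀ k l m {x₁ y₁ x₂ y₂ x₃ y₃ : ZMod 3}, k ≠ l ∧ k ≠ m ∧ l ≠ m →
      (e k).1 = (e 0).1 + (x₁ • u + y₁ • v) → (e l).1 = (e 0).1 + (x₂ • u + y₂ • v) →
      (e m).1 = (e 0).1 + (x₃ • u + y₃ • v) → ¬ (x₁ + x₂ + x₃ = 0 ∧ y₁ + y₂ + y₃ = 0) := by
    rintro k l m x₁ y₁ x₂ y₂ x₃ y₃ ⟨h1, h2, h3⟩ hk hl hm ⟨hx, hy⟩
    have := sum_zero (e 0).1 (e 0).1 (e 0).1 u v (three_V _) _ _ _ _ _ _ hx hy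
    rw [← hk, ← hl, ← hm] at this
    exact hs k l m h1 h2 h3 this
  have p013 := P 0 1 3 (by decide) e0 e1 e3
  have p023 := P 0 2 3 (by decide) e0 e2 e3
  have p123 := P 1 2 3 (by decide) e1 e2 e3
  simp only [zero_add, add_zero] at p013 p023 p123
  have hgood : Good x y := ⟨N _ (hne 3 0 (by decide)) e3 e0, N _ (hne 3 1 (by decide)) e3 e1,
    N _ (hne 3 2 (by decide)) e3 e2, p013, p023, p123⟩
  have hcomp : ∀ b c' : Fin 3 → ZMod 3, ∀ α β γ δ : ZMod 3, b ∈ C ∧ f b = j → c' ∈ C ∧ f c' = k →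
      b = b₁ + (α • u + β • v) → c' = (-(e 0).1 - b₁) + (γ • u + δ • v) → Comp x y α β γ δ := by
    intro b c' α β γ δ hb hc eb ec
    have Q : ∀ l {x₁ y₁ : ZMod 3}, (e l).1 = (e 0).1 + (x₁ • u + y₁ • v) →
        ¬ (x₁ + α + γ = 0 ∧ y₁ + β + δ = 0) := by
      rintro l x₁ y₁ hl ⟨hx, hy⟩
      have := sum_zero (e 0).1 b₁ (-(e 0).1 - b₁) u v (by abel) _ _ _ _ _ _ hx hy
      rw [← hl, ← eb, ← ec] at this
      refine hC _ (hm l).1 _ hb.1 _ hc.1 ?_ ?_ ?_ this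
      · intro h; apply hij; rw [← (hm l).2, h, hb.2]
      · intro h; apply hik; rw [← (hm l).2, h, hc.2]
      · intro h; apply hjk; rw [← hb.2, h, hc.2]
    have q0 := Q 0 e0
    have q1 := Q 1 e1
    have q2 := Q 2 e2
    have q3 := Q 3 e3
    simp only [zero_add] at q0 q1 q2
    exact ⟨q0, q1, q2, q3⟩
  have hb : ¬ (p + r = 0 ∧ q + s = 0) := by
    rintro ⟨hx, hy⟩
    have := sum_zero b₁ b₁ b₁ u v (three_V _) 0 0 p q r s (by rw [zero_add, hx])
      (by rw [zero_add, hy])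
    rw [← eb₁, ← eb₂, ← eb₃] at this
    exact hC _ hb₁.1 _ hb₂.1 _ hb₃.1 b12 b13 b23 this
  exact dec9 x y hgood c d (hcomp _ _ _ _ _ _ hb₁ hc₁ eb₁ ec₁) t g
    (hcomp _ _ _ _ _ _ hb₁ hc₂ eb₁ ec₂) (N _ c12 ec₁ ec₂) p q (N _ b12.symm eb₂ eb₁)
    (hcomp _ _ _ _ _ _ hb₂ hc₁ eb₂ ec₁) (hcomp _ _ _ _ _ _ hb₂ hc₂ eb₂ ec₂)
    r s (N _ b13.symm eb₃ eb₁) (N _ b23 eb₂ eb₃) hb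
    (hcomp _ _ _ _ _ _ hb₃ hc₁ eb₃ ec₁) (hcomp _ _ _ _ _ _ hb₃ hc₂ eb₃ ec₂)

theorem card_split (C : Finset (Fin 3 → ZMod 3)) (f : (Fin 3 → ZMod 3) → ZMod 3) :
    C.card = (C.filter fun x => f x = 0).card + (C.filter fun x => f x = 1).card +
      (C.filter fun x => f x = 2).card := by
  rw [Finset.card_eq_sum_card_fiberwise (f := f) (t := Finset.univ) (fun _ _ => by simp)]
  exact Fin.sum_univ_three (fun i : ZMod 3 => (C.filter fun x => f x = i).card)

end CapAux

/-- A maximal cap in `AG(3,3)` meets the three parallel planes given by the fibers of a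
surjective affine map `f : AG(3,3) → ZMod 3` in `4, 4, 1` or `3, 3, 3` points
(as a multiset of cardinalities). -/
theorem maximal_cap_AG33_plane_intersections
    (C : Finset (Fin 3 → ZMod 3)) (hC : MaximalCap C)
    (f : (Fin 3 → ZMod 3) →ᵃ[ZMod 3] ZMod 3) (hf : Function.Surjective f) :
    ({(C.filter fun x => f x = 0).card,
      (C.filter fun x => f x = 1).card,
      (C.filter fun x => f x = 2).card} : Multiset ℕ) = {4, 4, 1} ∨
    ({(C.filter fun x => f x = 0).card,
      (C.filter fun x => f x = 1).card,
      (C.filter fun x => f x = 2).card} : Multiset ℕ) = {3, 3, 3} := by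
  have h9 := hC.2 _ CapAux.parab_cap
  rw [CapAux.parab_card, CapAux.card_split C f] at h9
  have l0 := CapAux.plane_le hC.1 hf 0
  have l1 := CapAux.plane_le hC.1 hf 1
  have l2 := CapAux.plane_le hC.1 hf 2
  have n012 := CapAux.no432 hC.1 hf 0 1 2 (by decide) (by decide) (by decide)
  have n021 := CapAux.no432 hC.1 hf 0 2 1 (by decide) (by decide) (by decide)
  have n102 := CapAux.no432 hC.1 hf 1 0 2 (by decide) (by decide) (by decide)
  have n120 := CapAux.no432 hC.1 hf 1 2 0 (by decide) (by decide) (by decide)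
  have n201 := CapAux.no432 hC.1 hf 2 0 1 (by decide) (by decide) (by decide)
  have n210 := CapAux.no432 hC.1 hf 2 1 0 (by decide) (by decide) (by decide)
  generalize (C.filter fun x => f x = 0).card = a at *
  generalize (C.filter fun x => f x = 1).card = b at *
  generalize (C.filter fun x => f x = 2).card = c at *
  have h : (a = 4 ∧ b = 4 ∧ c = 1) ∨ (a = 4 ∧ b = 1 ∧ c = 4) ∨ (a = 1 ∧ b = 4 ∧ c = 4) ∨
      (a = 3 ∧ b = 3 ∧ c = 3) := by
    by_contra hcon
    have m012 : ¬ (4 ≤ a ∧ 3 ≤ b ∧ 2 ≤ c) := fun h => n012 h.1 h.2.1 h.2.2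
    have m021 : ¬ (4 ≤ a ∧ 3 ≤ c ∧ 2 ≤ b) := fun h => n021 h.1 h.2.1 h.2.2
    have m102 : ¬ (4 ≤ b ∧ 3 ≤ a ∧ 2 ≤ c) := fun h => n102 h.1 h.2.1 h.2.2
    have m120 : ¬ (4 ≤ b ∧ 3 ≤ c ∧ 2 ≤ a) := fun h => n120 h.1 h.2.1 h.2.2
    have m201 : ¬ (4 ≤ c ∧ 3 ≤ a ∧ 2 ≤ b) := fun h => n201 h.1 h.2.1 h.2.2
    have m210 : ¬ (4 ≤ c ∧ 3 ≤ b ∧ 2 ≤ a) := fun h => n210 h.1 h.2.1 h.2.2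
    omega
  rcases h with ⟨rfl, rfl, rfl⟩ | ⟨rfl, rfl, rfl⟩ | ⟨rfl, rfl, rfl⟩ | ⟨rfl, rfl, rfl⟩ <;> decide
end
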